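/- arXiv:2006.02880 — 3 statements merged into one kernel-verified Lean document; each statement's English description precedes it below -/
import Mathlib

section
/- Let κ and λ be infinite cardinals with κ < 𝔠 and κ ≤ λ ≤ 2^κ, where 𝔠 = 2^{ℵ₀}. Then there exist 2^λ mutually non-homeomorphic connected and locally connected Hausdorff spaces of cardinality κ and weight λ. In particular, up to homeomorphism there exist precisely 2^𝔠 countably infinite, connected, locally connected Hausdorff spaces, and precisely 𝔠 countably infinite, connected, locally connected, second countable Hausdorff spaces. -/
open Cardinal Set Topology

/-- The weight of a topological space: the least cardinality of a basis for its topology. -/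
noncomputable def tweight (X : Type) [TopologicalSpace X] : Cardinal :=
  sInf { c : Cardinal | ∃ B : Set (Set X), TopologicalSpace.IsTopologicalBasis B ∧ #B = c }

/-- A space is scattered if every nonempty subset has a point isolated in that subset. -/
def Scattered (X : Type) [TopologicalSpace X] : Prop :=
  ∀ S : Set X, S.Nonempty → ∃ x ∈ S, ∃ U : Set X, IsOpen U ∧ U ∩ S = {x}

/-- Strong zero-dimensionality: every closed set contained in an open set can be
separated from its complement by an open-closed set. -/
def StronglyZeroDimensional (X : Type) [TopologicalSpace X] : Prop :=
  ∀ A U : Set X, IsClosed A → IsOpen U → A ⊆ U →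
    ∃ V : Set X, IsOpen V ∧ IsClosed V ∧ A ⊆ V ∧ V ⊆ U

/-- A space is hereditarily paracompact if every subspace is paracompact. -/
def HereditarilyParacompact (X : Type) [TopologicalSpace X] : Prop :=
  ∀ S : Set X, ParacompactSpace S

/-- A space is perfectly normal iff it is normal and every closed set is a Gδ-set. -/
def PerfectlyNormal (X : Type) [TopologicalSpace X] : Prop :=
  NormalSpace X ∧ ∀ C : Set X, IsClosed C → IsGδ C

/-- A Hausdorff space is almost discrete iff the complement of some point is discrete. -/
def AlmostDiscrete (X : Type) [TopologicalSpace X] : Prop :=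
  T2Space X ∧ ∃ x : X, DiscreteTopology ({x}ᶜ : Set X)

/-- A space is almost metrizable iff it is perfectly normal and the complement of some
point is metrizable. -/
def AlmostMetrizable (X : Type) [TopologicalSpace X] : Prop :=
  PerfectlyNormal X ∧ ∃ x : X, TopologicalSpace.MetrizableSpace ({x}ᶜ : Set X)

/-- There is a family of `n` pairwise non-homeomorphic spaces, all with property `P`. -/
def ExistsNonHomeoFamily (n : Cardinal) (P : (X : Type) → TopologicalSpace X → Prop) : Prop :=
  ∃ (ι : Type) (F : ι → Type) (t : (i : ι) → TopologicalSpace (F i)),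
    #ι = n ∧ (∀ i, P (F i) (t i)) ∧
      ∀ i j, i ≠ j → IsEmpty (@Homeomorph (F i) (F j) (t i) (t j))

/-- Every family of pairwise non-homeomorphic spaces with property `P` has at most `n`
members. -/
def NonHomeoUpperBound (n : Cardinal) (P : (X : Type) → TopologicalSpace X → Prop) : Prop :=
  ∀ (ι : Type) (F : ι → Type) (t : (i : ι) → TopologicalSpace (F i)),
    (∀ i, P (F i) (t i)) →
    (∀ i j, i ≠ j → IsEmpty (@Homeomorph (F i) (F j) (t i) (t j))) → #ι ≤ n

/-- There are precisely `n` spaces with property `P`, up to homeomorphism. -/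
def PreciselyNonHomeo (n : Cardinal) (P : (X : Type) → TopologicalSpace X → Prop) : Prop :=
  ExistsNonHomeoFamily n P ∧ NonHomeoUpperBound n P

namespace S13

def KK : Type := List ℕ

noncomputable def cc (l : KK) (p : ℕ) : ℕ :=
  (show List ℕ from l).getD p (Encodable.encode (show List ℕ from l) + 5)

def klen (l : KK) : ℕ := (show List ℕ from l).length

lemma cc_ge (l : KK) (p : ℕ) (h : klen l ≤ p) :
    cc l p = Encodable.encode (show List ℕ from l) + 5 := by
  unfold cc; exact List.getD_eq_default _ _ h

lemma exists_pt (N : ℕ) (f : ℕ → ℕ) (S : Set KK) (hS : S.Finite) :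
    ∃ z : KK, z ∉ S ∧ ∀ p < N, cc z p = f p := by
  obtain ⟨M, hM⟩ := (hS.image klen).bddAbove
  refine ⟨(show List ℕ from (List.range (N + M + 1)).map f), ?_, ?_⟩
  · intro h
    have := hM ⟨_, h, rfl⟩
    simp [klen] at this
  · intro p hp
    unfold cc
    have : p < N + M + 1 := by omega
    simp [List.getD, this]

instance : Countable KK := inferInstanceAs (Countable (List ℕ))

instance : TopologicalSpace KK where
  IsOpen U := ∀ a ∈ U, ∃ D : Finset ℕ, (∀ p ∈ D, cc a p ≠ 0) ∧
    ∀ l, (∀ p ∈ D, cc l p = cc a p) → l ∈ U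
  isOpen_univ := fun a _ => ⟨∅, by simp, by simp⟩
  isOpen_inter := by
    classical
    rintro U V hU hV a ⟨h1, h2⟩
    obtain ⟨D, hD, h⟩ := hU a h1
    obtain ⟨E, hE, h'⟩ := hV a h2
    refine ⟨D ∪ E, ?_, fun l hl => ⟨h l fun p hp => hl p ?_, h' l fun p hp => hl p ?_⟩⟩
    · intro p hp
      rcases Finset.mem_union.1 hp with hp | hp
      · exact hD p hp
      · exact hE p hp
    · simp [hp]
    · simp [hp]
  isOpen_sUnion := by
    rintro s hs a ⟨U, hU, ha⟩
    obtain ⟨D, hD, h⟩ := hs U hU a ha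
    exact ⟨D, hD, fun l hl => ⟨U, hU, h l hl⟩⟩

lemma KK_isOpen (U : Set KK) : IsOpen U ↔ ∀ a ∈ U, ∃ D : Finset ℕ, (∀ p ∈ D, cc a p ≠ 0) ∧
    ∀ l, (∀ p ∈ D, cc l p = cc a p) → l ∈ U := Iff.rfl

lemma KK_basic (D : Finset ℕ) (v : ℕ → ℕ) (hv : ∀ p ∈ D, v p ≠ 0) :
    IsOpen {l : KK | ∀ p ∈ D, cc l p = v p} := by
  rw [KK_isOpen]
  intro a ha
  refine ⟨D, fun p hp => ?_, fun l hl p hp => ?_⟩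
  · rw [ha p hp]; exact hv p hp
  · rw [hl p hp, ha p hp]

instance : T2Space KK := by
  refine ⟨fun a b hab => ?_⟩
  set p := max (klen a) (klen b)
  have ha := cc_ge a p (le_max_left _ _)
  have hb := cc_ge b p (le_max_right _ _)
  refine ⟨_, _, KK_basic {p} (cc a) (by simp [ha]), KK_basic {p} (cc b) (by simp [hb]),
    fun _ _ => rfl, fun _ _ => rfl, ?_⟩
  rw [Set.disjoint_left]
  intro l h1 h2
  have e1 := h1 p (by simp)
  have e2 := h2 p (by simp)
  rw [e1, ha, hb] at e2
  apply hab
  exact Encodable.encode_injective (α := List ℕ) (Nat.add_right_cancel e2)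

lemma KK_conn (D : Finset ℕ) (v : ℕ → ℕ) (hv : ∀ p ∈ D, v p ≠ 0) (S : Set KK) (hS : S.Finite) :
    IsConnected ({l : KK | ∀ p ∈ D, cc l p = v p} \ S) := by
  classical
  have bd : ∀ D : Finset ℕ, ∃ N, ∀ p ∈ D, p < N := fun D =>
    ⟨D.sup id + 1, fun p hp => Nat.lt_succ_of_le (Finset.le_sup (f := id) hp)⟩
  constructor
  · obtain ⟨N, hN⟩ := bd D
    obtain ⟨z, hz, h⟩ := exists_pt N v S hS
    exact ⟨z, fun p hp => h p (hN p hp), hz⟩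
  set B := {l : KK | ∀ p ∈ D, cc l p = v p} with hB
  have hBo : IsOpen (B \ S) := (KK_basic D v hv).sdiff hS.isClosed
  rintro U V hU hV hsub ⟨a, haB, haU⟩ ⟨b, hbB, hbV⟩
  obtain ⟨D1, hD1, h1⟩ := (KK_isOpen _).1 (hBo.inter hU) a ⟨haB, haU⟩
  obtain ⟨D2, hD2, h2⟩ := (KK_isOpen _).1 (hBo.inter hV) b ⟨hbB, hbV⟩
  obtain ⟨N, hN⟩ := bd (D ∪ D1 ∪ D2)
  obtain ⟨z, hzS, hz⟩ := exists_pt N (fun p => if p ∈ D then v p else 0) S hS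
  have hzB : z ∈ B \ S := by
    refine ⟨fun p hp => ?_, hzS⟩
    rw [hz p (hN p (by simp [hp]))]; simp [hp]
  -- key
  have key : ∀ (W : Set KK), IsOpen W → z ∈ W → ∀ (E : Finset ℕ) (e : KK), e ∈ B → E ⊆ D1 ∪ D2 →
      ∃ w ∈ W, ∀ p ∈ E, cc w p = cc e p := by
    intro W hW hzW E e he hE
    obtain ⟨D3, hD3, h3⟩ := (KK_isOpen _).1 hW z hzW
    obtain ⟨N', hN'⟩ := bd (E ∪ D3)
    obtain ⟨w, -, hw⟩ := exists_pt N' (fun p => if p ∈ D3 then cc z p else cc e p) ∅ finite_empty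
    refine ⟨w, h3 w fun p hp => ?_, fun p hp => ?_⟩
    · rw [hw p (hN' p (by simp [hp]))]; simp [hp]
    · rw [hw p (hN' p (by simp [hp]))]
      by_cases h : p ∈ D3
      · have h0 := hD3 p h
        have hp' : p ∈ D1 ∪ D2 := hE hp
        have hpN : p < N := hN p (by simp at hp' ⊢; tauto)
        have hzp := hz p hpN
        by_cases hd : p ∈ D
        · simp only [hd, if_true] at hzp
          simp only [h, if_true]
          rw [hzp, he p hd]
        · simp only [hd, if_false] at hzp
          exact absurd hzp h0
      · simp [h]
  rcases hsub hzB with hzU | hzV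
  · obtain ⟨w, hw, hw'⟩ := key _ (hBo.inter hU) ⟨hzB, hzU⟩ D2 b hbB.1 Finset.subset_union_right
    have := h2 w hw'
    exact ⟨w, this.1, hw.2, this.2⟩
  · obtain ⟨w, hw, hw'⟩ := key _ (hBo.inter hV) ⟨hzB, hzV⟩ D1 a haB.1 Finset.subset_union_left
    have := h1 w hw'
    exact ⟨w, this.1, this.2, hw.2⟩

instance : ConnectedSpace KK := by
  rw [connectedSpace_iff_univ]
  simpa using KK_conn ∅ (fun _ => 1) (by simp) ∅ finite_empty

lemma KK_compl (x : KK) : IsConnected ({x}ᶜ : Set KK) := by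
  have := KK_conn ∅ (fun _ => 1) (by simp) {x} (finite_singleton x)
  simpa [Set.compl_eq_univ_sdiff] using this

instance : LocallyConnectedSpace KK := by
  rw [locallyConnectedSpace_iff_subsets_isOpen_isConnected]
  intro x U hU
  obtain ⟨W, hWU, hW, hx⟩ := mem_nhds_iff.1 hU
  obtain ⟨D, hD, h⟩ := (KK_isOpen _).1 hW x hx
  refine ⟨_, fun l hl => hWU (h l hl), KK_basic D (cc x) hD, fun _ _ => rfl, ?_⟩
  have := KK_conn D (cc x) hD ∅ finite_empty
  rw [sdiff_empty] at this
  exact this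

instance : SecondCountableTopology KK := by
  refine (TopologicalSpace.isTopologicalBasis_of_isOpen_of_nhds
    (s := range fun q : {q : KK × Finset ℕ // ∀ p ∈ q.2, cc q.1 p ≠ 0} =>
      {l : KK | ∀ p ∈ q.1.2, cc l p = cc q.1.1 p}) ?_ ?_).secondCountableTopology
        (countable_range _)
  · rintro _ ⟨⟨⟨a, D⟩, h⟩, rfl⟩
    exact KK_basic D (cc a) h
  · intro a U ha hU
    obtain ⟨D, hD, h⟩ := (KK_isOpen _).1 hU a ha
    exact ⟨_, ⟨⟨⟨a, D⟩, hD⟩, rfl⟩, fun _ _ => rfl, h⟩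

structure IsEnd {Y : Type} [TopologicalSpace Y] (V : ℕ → Set Y) : Prop where
  anti : Antitone V
  opn : ∀ n, IsOpen (V n)
  conn : ∀ n, IsConnected (V n)
  sep : ∀ y, ∃ n, ∃ U, IsOpen U ∧ y ∈ U ∧ Disjoint U (V n)
  proper : V 0 ≠ Set.univ

def KE (j : ℕ) (n : ℕ) : Set KK := {l | ∀ p ∈ Finset.range (n + 1), cc l p = j}

lemma KE_isEnd (j : ℕ) (h0 : j ≠ 0) (h5 : j < 5) : IsEnd (KE j) where
  anti := fun m n hmn l hl p hp => hl p (by simp at hp ⊢; omega)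
  opn := fun n => KK_basic _ _ (by simp [h0])
  conn := fun n => by
    have := KK_conn (Finset.range (n+1)) (fun _ => j) (by simp [h0]) ∅ finite_empty
    rw [sdiff_empty] at this
    exact this
  sep := fun y => by
    refine ⟨klen y, _, KK_basic {klen y} (cc y) ?_, fun _ _ => rfl, ?_⟩
    · simp [cc_ge y _ le_rfl]
    · rw [Set.disjoint_left]
      intro l h1 h2
      have e1 := h1 (klen y) (by simp)
      have e2 := h2 (klen y) (by simp)
      rw [cc_ge y _ le_rfl] at e1
      omega
  proper := by
    intro h
    obtain ⟨z, -, hz⟩ := exists_pt 1 (fun _ => 0) ∅ finite_empty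
    have : z ∈ KE j 0 := by rw [h]; trivial
    have h1 := this 0 (by simp)
    have h2 := hz 0 (by simp)
    omega

lemma KE_disj (i j : ℕ) (h : i ≠ j) : Disjoint (KE i 0) (KE j 0) := by
  rw [Set.disjoint_left]
  intro l h1 h2
  have e1 := h1 0 (by simp)
  have e2 := h2 0 (by simp)
  omega

lemma KE_diff (j : ℕ) (h0 : j ≠ 0) (n : ℕ) (x : KK) : ∃ y ∈ KE j n, y ≠ x := by
  obtain ⟨y, hy, h⟩ := (KK_conn (Finset.range (n+1)) (fun _ => j) (by simp [h0]) {x} (finite_singleton x)).nonempty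
  exact ⟨y, hy, h⟩

structure Blk where
  Y : Type
  top : TopologicalSpace Y
  t2 : T2Space Y
  conn : ConnectedSpace Y
  lc : LocallyConnectedSpace Y
  sc : SecondCountableTopology Y
  cnt : Countable Y
  V : ℕ → Set Y
  isEnd : IsEnd V

attribute [instance] Blk.top Blk.t2 Blk.conn Blk.lc Blk.sc Blk.cnt

def Wdg {ι : Type} (Y : ι → Blk) (_F : Filter ι) : Type := Option (Σ i, (Y i).Y)

section wedge
variable {ι : Type} {Y : ι → Blk} {F : Filter ι}

def bp : Wdg Y F := (none : Option (Σ i, (Y i).Y))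
def inj (i : ι) (y : (Y i).Y) : Wdg Y F := (some ⟨i, y⟩ : Option (Σ i, (Y i).Y))

lemma wdg_cases (x : Wdg Y F) : x = bp ∨ ∃ i y, x = inj i y := by
  rcases (show Option (Σ i, (Y i).Y) from x) with _ | ⟨i, y⟩
  · exact Or.inl rfl
  · exact Or.inr ⟨i, y, rfl⟩

lemma inj_ne (i : ι) (y : (Y i).Y) : (inj i y : Wdg Y F) ≠ bp := by
  intro h; exact Option.some_ne_none _ h

lemma inj_eq {i j : ι} {y : (Y i).Y} {z : (Y j).Y} (h : (inj i y : Wdg Y F) = inj j z) : i = j :=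
  congrArg Sigma.fst (Option.some_injective _ h)

lemma inj_inj (i : ι) : Function.Injective (inj i : (Y i).Y → Wdg Y F) := by
  intro y z h
  have := Option.some_injective _ h
  simpa using this

instance : TopologicalSpace (Wdg Y F) where
  IsOpen U := (∀ i, IsOpen (inj i ⁻¹' U)) ∧
    (bp ∈ U → ∃ n, (∀ m ≥ n, ∀ i, (Y i).V m ⊆ inj i ⁻¹' U) ∧ {i | ∀ y, inj i y ∈ U} ∈ F)
  isOpen_univ := by simp
  isOpen_inter := by
    rintro U V ⟨h1, h2⟩ ⟨h1', h2'⟩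
    refine ⟨fun i => (h1 i).inter (h1' i), fun ⟨hb, hb'⟩ => ?_⟩
    obtain ⟨n, hn, hA⟩ := h2 hb
    obtain ⟨n', hn', hA'⟩ := h2' hb'
    refine ⟨max n n', fun m hm i y hy => ⟨hn m (by omega) i hy, hn' m (by omega) i hy⟩, ?_⟩
    filter_upwards [hA, hA'] with i h h' y using ⟨h y, h' y⟩
  isOpen_sUnion := by
    intro s hs
    refine ⟨fun i => ?_, ?_⟩
    · rw [preimage_sUnion]
      exact isOpen_biUnion fun t ht => (hs t ht).1 i
    · rintro ⟨t, ht, hb⟩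
      obtain ⟨n, hn, hA⟩ := (hs t ht).2 hb
      refine ⟨n, fun m hm i y hy => ⟨t, ht, hn m hm i hy⟩, ?_⟩
      filter_upwards [hA] with i h y using ⟨t, ht, h y⟩

lemma wdg_isOpen (U : Set (Wdg Y F)) : IsOpen U ↔ (∀ i, IsOpen (inj i ⁻¹' U)) ∧
    (bp ∈ U → ∃ n, (∀ m ≥ n, ∀ i, (Y i).V m ⊆ inj i ⁻¹' U) ∧ {i | ∀ y, inj i y ∈ U} ∈ F) := Iff.rfl

lemma inj_preimage_ne {i j : ι} (h : j ≠ i) (s : Set (Y i).Y) :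
    (inj j : (Y j).Y → Wdg Y F) ⁻¹' (inj i '' s) = ∅ := by
  ext y
  simp only [mem_preimage, mem_image, mem_empty_iff_false, iff_false]
  rintro ⟨z, _, hz⟩
  exact h (inj_eq hz).symm

lemma bp_notMem (i : ι) (s : Set (Y i).Y) : (bp : Wdg Y F) ∉ inj i '' s := by
  rintro ⟨z, _, hz⟩; exact inj_ne i z hz

lemma inj_openEmb (i : ι) : IsOpenEmbedding (inj i : (Y i).Y → Wdg Y F) := by
  refine IsOpenEmbedding.of_continuous_injective_isOpenMap ⟨fun U hU => hU.1 i⟩ (inj_inj i) ?_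
  intro s hs
  rw [wdg_isOpen]
  refine ⟨fun j => ?_, fun h => absurd h (bp_notMem i s)⟩
  by_cases h : j = i
  · subst h
    rwa [preimage_image_eq _ (inj_inj j)]
  · rw [inj_preimage_ne h]; exact isOpen_empty

/-- basic neighbourhood of the base point -/
def OO (n : ℕ) (A : Set ι) : Set (Wdg Y F) :=
  {x | ∀ i y, x = inj i y → i ∈ A ∨ y ∈ (Y i).V n}

lemma bp_mem_OO (n : ℕ) (A : Set ι) : (bp : Wdg Y F) ∈ OO n A :=
  fun i y h => absurd h.symm (inj_ne i y)

lemma inj_mem_OO (n : ℕ) (A : Set ι) (i : ι) (y : (Y i).Y) :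
    (inj i y : Wdg Y F) ∈ OO n A ↔ (i ∈ A ∨ y ∈ (Y i).V n) := by
  constructor
  · intro h; exact h i y rfl
  · intro h j z e
    obtain rfl := inj_eq e
    obtain rfl := inj_inj _ e
    exact h

lemma OO_open (n : ℕ) (A : Set ι) (hA : A ∈ F) : IsOpen (OO n A : Set (Wdg Y F)) := by
  rw [wdg_isOpen]
  refine ⟨fun i => ?_, fun _ => ⟨n, fun m hm i y hy => ?_, ?_⟩⟩
  · by_cases h : i ∈ A
    · convert isOpen_univ
      ext y; simp [inj_mem_OO, h]
    · convert (Y i).isEnd.opn n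
      ext y; simp [inj_mem_OO, h]
  · rw [mem_preimage, inj_mem_OO]
    exact Or.inr ((Y i).isEnd.anti hm hy)
  · filter_upwards [hA] with i hi y
    rw [inj_mem_OO]; exact Or.inl hi

lemma OO_sub {U : Set (Wdg Y F)} (hU : IsOpen U) (hb : bp ∈ U) :
    ∃ n, OO n {i | ∀ y, inj i y ∈ U} ⊆ U ∧ {i | ∀ y, inj i y ∈ U} ∈ F := by
  obtain ⟨n, hn, hA⟩ := ((wdg_isOpen _).1 hU).2 hb
  refine ⟨n, fun x hx => ?_, hA⟩
  rcases wdg_cases x with rfl | ⟨i, y, rfl⟩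
  · exact hb
  · rcases (inj_mem_OO _ _ _ _).1 hx with h | h
    · exact h y
    · exact hn n le_rfl i h

lemma OO_full (n : ℕ) (A : Set ι) : {i | ∀ y, (inj i y : Wdg Y F) ∈ OO n A} = A := by
  ext i
  simp only [inj_mem_OO, mem_ofPred_eq]
  refine ⟨fun h => ?_, fun h y => Or.inl h⟩
  by_contra hi
  apply (Y i).isEnd.proper
  rw [Set.eq_univ_iff_forall]
  intro y
  exact (Y i).isEnd.anti (Nat.zero_le n) ((h y).resolve_left hi)

lemma wdg_preconn (W : ∀ i, Set (Y i).Y) (hW : ∀ i, IsPreconnected (W i))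
    (hV : ∀ i m, ((Y i).V m ∩ W i).Nonempty) :
    IsPreconnected {x : Wdg Y F | ∀ i y, x = inj i y → y ∈ W i} := by
  apply isPreconnected_of_forall bp
  intro x hx
  rcases wdg_cases x with rfl | ⟨i, y, rfl⟩
  · exact ⟨{bp}, by simpa using fun i y h => absurd h.symm (inj_ne i y), rfl, rfl,
      isPreconnected_singleton⟩
  · refine ⟨insert bp (inj i '' W i), ?_, by simp, ?_, ?_⟩
    · rintro z (rfl | ⟨w, hw, rfl⟩)
      · exact fun i y h => absurd h.symm (inj_ne i y)
      · intro j z e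
        obtain rfl := inj_eq e
        obtain rfl := inj_inj _ e
        exact hw
    · exact Or.inr ⟨y, hx i y rfl, rfl⟩
    · refine ((hW i).image _ (inj_openEmb i).continuous.continuousOn).subset_closure
        (subset_insert _ _) ?_
      rintro z (rfl | hz)
      · rw [mem_closure_iff]
        intro U hU hb
        obtain ⟨n, hn, -⟩ := ((wdg_isOpen _).1 hU).2 hb
        obtain ⟨w, hw, hw'⟩ := hV i n
        exact ⟨inj i w, hn n le_rfl i hw, w, hw', rfl⟩
      · exact subset_closure hz

instance : ConnectedSpace (Wdg Y F) := by
  rw [connectedSpace_iff_univ]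
  refine ⟨⟨bp, trivial⟩, ?_⟩
  have := wdg_preconn (F := F) (fun i => (Set.univ : Set (Y i).Y)) (fun i => isPreconnected_univ)
    (fun i m => by simpa using ((Y i).isEnd.conn m).nonempty)
  simpa using this

instance : LocallyConnectedSpace (Wdg Y F) := by
  classical
  rw [locallyConnectedSpace_iff_subsets_isOpen_isConnected]
  intro x U hU
  obtain ⟨W, hWU, hW, hx⟩ := mem_nhds_iff.1 hU
  rcases wdg_cases x with rfl | ⟨i, y, rfl⟩
  · obtain ⟨n, hn, hA⟩ := OO_sub hW hx
    refine ⟨_, hn.trans hWU, OO_open n _ hA, bp_mem_OO _ _, ⟨_, bp_mem_OO _ _⟩, ?_⟩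
    generalize {i | ∀ y, inj i y ∈ W} = A
    convert wdg_preconn (F := F) (fun i => if i ∈ A then (Set.univ : Set (Y i).Y) else (Y i).V n) ?_ ?_ using 1
    · ext x
      refine forall_congr' fun i => forall_congr' fun y => imp_congr Iff.rfl ?_
      by_cases h : i ∈ A <;> simp [h]
    · intro i
      by_cases h : i ∈ A
      · simpa [h] using isPreconnected_univ
      · simpa [h] using ((Y i).isEnd.conn n).isPreconnected
    · intro i m
      obtain ⟨w, hw⟩ := ((Y i).isEnd.conn (max m n)).nonempty
      refine ⟨w, (Y i).isEnd.anti (le_max_left _ _) hw, ?_⟩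
      by_cases h : i ∈ A
      · simp [h]
      · simpa [h] using (Y i).isEnd.anti (le_max_right _ _) hw
  · have h1 : inj i ⁻¹' W ∈ 𝓝 y := (hW.preimage (inj_openEmb i).continuous).mem_nhds hx
    obtain ⟨Z, hZ, hZo, hy, hc⟩ := locallyConnectedSpace_iff_subsets_isOpen_isConnected.1
      (Y i).lc y _ h1
    exact ⟨inj i '' Z, (image_subset_iff.2 hZ).trans hWU, (inj_openEmb i).isOpenMap _ hZo,
      ⟨y, hy, rfl⟩, hc.image _ (inj_openEmb i).continuous.continuousOn⟩

lemma wdg_t2 (hF : ∀ i, {i}ᶜ ∈ F) : T2Space (Wdg Y F) := by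
  have key : ∀ i (y : (Y i).Y), ∃ U V : Set (Wdg Y F), IsOpen U ∧ IsOpen V ∧
      inj i y ∈ U ∧ bp ∈ V ∧ Disjoint U V := by
    intro i y
    obtain ⟨n, U, hU, hy, hd⟩ := (Y i).isEnd.sep y
    refine ⟨inj i '' U, OO n {i}ᶜ, (inj_openEmb i).isOpenMap _ hU, OO_open n _ (hF i),
      ⟨y, hy, rfl⟩, bp_mem_OO _ _, ?_⟩
    rw [Set.disjoint_left]
    rintro _ ⟨z, hz, rfl⟩ h
    rcases (inj_mem_OO _ _ _ _).1 h with h | h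
    · exact h rfl
    · exact Set.disjoint_left.1 hd hz h
  refine ⟨fun x z hxz => ?_⟩
  rcases wdg_cases x with rfl | ⟨i, y, rfl⟩ <;> rcases wdg_cases z with rfl | ⟨j, w, rfl⟩
  · exact absurd rfl hxz
  · obtain ⟨U, V, h1, h2, h3, h4, h5⟩ := key j w
    exact ⟨V, U, h2, h1, h4, h3, h5.symm⟩
  · exact key i y
  · by_cases h : i = j
    · subst h
      obtain ⟨U, V, h1, h2, h3, h4, h5⟩ := t2_separation (show y ≠ w from fun h => hxz (h ▸ rfl))
      exact ⟨_, _, (inj_openEmb i).isOpenMap _ h1, (inj_openEmb i).isOpenMap _ h2, ⟨y, h3, rfl⟩,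
        ⟨w, h4, rfl⟩, (disjoint_image_iff (inj_inj i)).2 h5⟩
    · refine ⟨_, _, (inj_openEmb i).isOpen_range, (inj_openEmb j).isOpen_range, ⟨y, rfl⟩,
        ⟨w, rfl⟩, ?_⟩
      rw [Set.disjoint_left]
      rintro _ ⟨a, rfl⟩ ⟨b, hb⟩
      exact h (inj_eq hb).symm

lemma wdg_end (hF : ∀ i, {i}ᶜ ∈ F) (i : ι) (V' : ℕ → Set (Y i).Y) (hV' : IsEnd V')
    (hd : Disjoint ((Y i).V 0) (V' 0)) : IsEnd (fun n => (inj i '' V' n : Set (Wdg Y F))) where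
  anti := fun m n h => image_mono (hV'.anti h)
  opn := fun n => (inj_openEmb i).isOpenMap _ (hV'.opn n)
  conn := fun n => (hV'.conn n).image _ (inj_openEmb i).continuous.continuousOn
  sep := by
    intro x
    rcases wdg_cases x with rfl | ⟨j, y, rfl⟩
    · refine ⟨0, OO 0 {i}ᶜ, OO_open _ _ (hF i), bp_mem_OO _ _, ?_⟩
      rw [Set.disjoint_left]
      rintro _ h ⟨z, hz, rfl⟩
      rcases (inj_mem_OO _ _ _ _).1 h with h | h
      · exact h rfl
      · exact Set.disjoint_left.1 hd h hz
    · by_cases h : j = i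
      · subst h
        obtain ⟨n, U, hU, hy, hd⟩ := hV'.sep y
        exact ⟨n, inj j '' U, (inj_openEmb j).isOpenMap _ hU, ⟨y, hy, rfl⟩,
          (disjoint_image_iff (inj_inj j)).2 hd⟩
      · refine ⟨0, range (inj j), (inj_openEmb j).isOpen_range, ⟨y, rfl⟩, ?_⟩
        rw [Set.disjoint_left]
        rintro _ ⟨a, rfl⟩ ⟨b, _, hb⟩
        exact h (inj_eq hb).symm
  proper := by
    intro h
    have : (bp : Wdg Y F) ∈ inj i '' V' 0 := by
      have h' : inj i '' V' 0 = (Set.univ : Set (Wdg Y F)) := h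
      rw [h']; trivial
    exact bp_notMem _ _ this

instance [Countable ι] : Countable (Wdg Y F) :=
  inferInstanceAs (Countable (Option (Σ i, (Y i).Y)))

lemma wdg_card [Infinite ι] : #(Wdg Y F) = #ι := by
  apply le_antisymm
  · have h1 : #(Wdg Y F) = #(Σ i, (Y i).Y) + 1 := Cardinal.mk_option
    have h2 : #(Σ i, (Y i).Y) ≤ #ι := by
      rw [Cardinal.mk_sigma]
      calc Cardinal.sum (fun i => #(Y i).Y) ≤ Cardinal.sum (fun _ : ι => ℵ₀) :=
            Cardinal.sum_le_sum _ _ fun i => Cardinal.mk_le_aleph0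
        _ = #ι := by simp
    rw [h1]
    exact Cardinal.add_le_of_le (Cardinal.aleph0_le_mk ι) h2
      (Cardinal.one_le_aleph0.trans (Cardinal.aleph0_le_mk ι))
  · have hne : ∀ i, Nonempty (Y i).Y := fun i => inferInstance
    exact Cardinal.mk_le_of_injective (f := fun i => (inj i (hne i).some : Wdg Y F))
      fun i j h => inj_eq h

/-- a connected subset avoiding the base point lies in one block. -/
lemma conn_in_block (s : Set (Wdg Y F)) (hs : IsPreconnected s) (hb : bp ∉ s) (i : ι)
    (y : (Y i).Y) (hy : inj i y ∈ s) : s ⊆ range (inj i) := by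
  refine hs.subset_left_of_subset_union (u := range (inj i)) (v := ⋃ j ≠ i, range (inj j))
    (inj_openEmb i).isOpen_range
    (isOpen_biUnion fun j _ => (inj_openEmb j).isOpen_range) ?_ ?_ ⟨_, hy, y, rfl⟩
  · rw [Set.disjoint_left]
    rintro _ ⟨a, rfl⟩ h
    simp only [mem_iUnion] at h
    obtain ⟨j, hj, b, hb⟩ := h
    exact hj (inj_eq hb)
  · intro x hx
    rcases wdg_cases x with rfl | ⟨j, z, rfl⟩
    · exact absurd hx hb
    · by_cases h : j = i
      · subst h; exact Or.inl ⟨z, rfl⟩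
      · right; simp only [mem_iUnion]; exact ⟨j, h, z, rfl⟩

end wedge

section filt
variable {ι Λ : Type}

def FT (A : Λ → Set ι) (T : Set Λ) : Filter ι where
  sets := {B | ∃ s : Finset Λ, (∀ t ∈ s, t ∈ T) ∧ ((⋂ t ∈ s, A t) \ B).Finite}
  univ_sets := ⟨∅, by simp, by simp⟩
  sets_of_superset := by
    rintro B C ⟨s, hs, h⟩ hBC
    exact ⟨s, hs, h.subset (sdiff_subset_sdiff_right hBC)⟩
  inter_sets := by
    classical
    rintro B C ⟨s, hs, h⟩ ⟨s', hs', h'⟩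
    refine ⟨s ∪ s', ?_, (h.union h').subset ?_⟩
    · intro t ht
      rcases Finset.mem_union.1 ht with ht | ht
      · exact hs t ht
      · exact hs' t ht
    · rintro x ⟨hx, hn⟩
      simp only [mem_iInter, Finset.mem_union] at hx
      by_cases hB : x ∈ B
      · right
        refine ⟨?_, fun hC => hn ⟨hB, hC⟩⟩
        simp only [mem_iInter]
        exact fun t ht => hx t (Or.inr ht)
      · left
        refine ⟨?_, hB⟩
        simp only [mem_iInter]
        exact fun t ht => hx t (Or.inl ht)

lemma mem_FT (A : Λ → Set ι) (T : Set Λ) (B : Set ι) : B ∈ FT A T ↔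
  ∃ s : Finset Λ, (∀ t ∈ s, t ∈ T) ∧ ((⋂ t ∈ s, A t) \ B).Finite := Iff.rfl

lemma FT_compl (A : Λ → Set ι) (T : Set Λ) (i : ι) : {i}ᶜ ∈ FT A T :=
  (mem_FT _ _ _).2 ⟨∅, by simp, by simp⟩

lemma FT_self (A : Λ → Set ι) (T : Set Λ) (t : Λ) (ht : t ∈ T) : A t ∈ FT A T :=
  (mem_FT _ _ _).2 ⟨{t}, by simpa using ht, by simp⟩

def Indep (A : Λ → Set ι) : Prop :=
  ∀ s : Finset Λ, ∀ t, t ∉ s → ((⋂ u ∈ s, A u) \ A t).Infinite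

lemma FT_inj (A : Λ → Set ι) (hA : Indep A) : Function.Injective (FT A) := by
  have key : ∀ T T', FT A T = FT A T' → T ⊆ T' := by
    intro T T' h t ht
    by_contra hn
    have h1 := FT_self A T t ht
    rw [h] at h1
    obtain ⟨s, hs, hf⟩ := (mem_FT _ _ _).1 h1
    exact hA s t (fun h => hn (hs t h)) hf
  intro T T' h
  exact Subset.antisymm (key _ _ h) (key _ _ h.symm)

lemma exists_indep (ι Λ : Type) [Infinite ι] (h : #Λ ≤ 2 ^ #ι) : ∃ A : Λ → Set ι, Indep A := by
  classical
  have e1 : #(ℕ × Finset ι × Finset (Finset ι)) = #ι := by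
    simp [Cardinal.mk_finset_of_infinite]
  obtain ⟨e⟩ := Cardinal.eq.1 e1
  have h2 : #Λ ≤ #(Set ι) := by rwa [Cardinal.mk_set]
  obtain ⟨f⟩ := h2
  refine ⟨fun t => e '' {q | q.2.1.filter (· ∈ f t) ∈ q.2.2}, ?_⟩
  intro s t hts
  have hx : ∀ u ∈ s, ∃ x, ¬ (x ∈ f u ↔ x ∈ f t) := by
    intro u hu
    by_contra! hh
    exact hts (f.injective (Set.ext hh) ▸ hu)
  choose! x hx using hx
  set G := s.image x
  set 𝒢 := s.image fun u => G.filter (· ∈ f u)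
  refine Set.infinite_of_injective_forall_mem (f := fun n : ℕ => e (n, G, 𝒢)) ?_ ?_
  · intro m n hmn
    simpa using hmn
  · intro n
    refine ⟨?_, ?_⟩
    · simp only [mem_iInter]
      intro u hu
      exact ⟨(n, G, 𝒢), (Finset.mem_image.2 ⟨u, hu, rfl⟩ : G.filter (· ∈ f u) ∈ 𝒢), rfl⟩
    · rintro ⟨q, hq, hqe⟩
      obtain rfl := e.injective hqe
      obtain ⟨u, hu, hE⟩ := Finset.mem_image.1 (show G.filter (· ∈ f t) ∈ 𝒢 from hq)
      have hG : x u ∈ G := Finset.mem_image.2 ⟨u, hu, rfl⟩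
      have := Finset.ext_iff.1 hE (x u)
      simp only [Finset.mem_filter, hG, true_and] at this
      exact hx u hu this

variable {Y : ι → Blk}

lemma weight_FT [Infinite ι] (A : Λ → Set ι) (hA : Indep A) (T : Set Λ)
    (hT : #T = #Λ) (hle : #ι ≤ #Λ) : tweight (Wdg Y (FT A T)) = #Λ := by
  classical
  have hι : ℵ₀ ≤ #ι := Cardinal.aleph0_le_mk ι
  have hΛ : ℵ₀ ≤ #Λ := hι.trans hle
  have : Infinite Λ := Cardinal.infinite_iff.2 hΛ
  apply le_antisymm
  · set B1 : Set (Set (Wdg Y (FT A T))) := range fun q : (Σ i, TopologicalSpace.countableBasis (Y i).Y) =>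
      inj q.1 '' (q.2 : Set (Y q.1).Y) with hB1
    set B2 : Set (Set (Wdg Y (FT A T))) := range fun q : {q : ℕ × Finset Λ × Finset ι // ∀ t ∈ q.2.1, t ∈ T} =>
      OO q.1.1 ((⋂ t ∈ q.1.2.1, A t) \ q.1.2.2) with hB2
    have hb : TopologicalSpace.IsTopologicalBasis (B1 ∪ B2) := by
      apply TopologicalSpace.isTopologicalBasis_of_isOpen_of_nhds
      · rintro _ (⟨⟨i, b, hb⟩, rfl⟩ | ⟨⟨⟨n, s, E⟩, h⟩, rfl⟩)
        · exact (inj_openEmb i).isOpenMap _ (TopologicalSpace.isOpen_of_mem_countableBasis hb)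
        · apply OO_open
          refine (mem_FT _ _ _).2 ⟨s, h, E.finite_toSet.subset ?_⟩
          rintro x ⟨hx, hn⟩
          by_contra hE
          exact hn ⟨hx, hE⟩
      · intro x U hx hU
        rcases wdg_cases x with rfl | ⟨i, y, rfl⟩
        · obtain ⟨n, hn, hF⟩ := OO_sub hU hx
          obtain ⟨s, hs, hf⟩ := (mem_FT _ _ _).1 hF
          refine ⟨_, Or.inr ⟨⟨⟨n, s, hf.toFinset⟩, hs⟩, rfl⟩, bp_mem_OO _ _, ?_⟩
          refine Subset.trans ?_ hn
          intro z hz i y e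
          rcases hz i y e with ⟨h1, h2⟩ | h
          · left
            by_contra h3
            exact h2 (by simpa using ⟨by simpa using h1, by simpa using h3⟩)
          · exact Or.inr h
        · obtain ⟨b, hb, hy, hbU⟩ := (TopologicalSpace.isBasis_countableBasis (Y i).Y).exists_subset_of_mem_open
            (show y ∈ inj i ⁻¹' U from hx) (hU.preimage (inj_openEmb i).continuous)
          exact ⟨_, Or.inl ⟨⟨i, b, hb⟩, rfl⟩, ⟨y, hy, rfl⟩, image_subset_iff.2 hbU⟩
    have c1 : #B1 ≤ #Λ := by
      refine Cardinal.mk_range_le.trans (le_trans ?_ hle)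
      rw [Cardinal.mk_sigma]
      calc Cardinal.sum (fun i => #(TopologicalSpace.countableBasis (Y i).Y))
          ≤ Cardinal.sum (fun _ : ι => ℵ₀) :=
            Cardinal.sum_le_sum _ _ fun i =>
              Cardinal.le_aleph0_iff_set_countable.2 (TopologicalSpace.countable_countableBasis _)
        _ = #ι := by simp
    have c2 : #B2 ≤ #Λ := by
      refine Cardinal.mk_range_le.trans ((Cardinal.mk_subtype_le _).trans ?_)
      simp [Cardinal.mk_finset_of_infinite, hle]
    refine le_trans (b := #↥(B1 ∪ B2)) (csInf_le' ⟨B1 ∪ B2, hb, rfl⟩) ?_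
    exact (Cardinal.mk_union_le _ _).trans (Cardinal.add_le_of_le hΛ c1 c2)
  · apply le_csInf
    · exact ⟨_, _, TopologicalSpace.isTopologicalBasis_opens, rfl⟩
    rintro _ ⟨B, hB, rfl⟩
    have hιB : #ι ≤ #B := by
      have : ∀ i, ∃ b ∈ B, b.Nonempty ∧ b ⊆ range (inj i) := by
        intro i
        have y : (Y i).Y := Classical.arbitrary _
        obtain ⟨b, hb, hy, hs⟩ := hB.exists_subset_of_mem_open (show inj i y ∈ range (inj i) from ⟨y, rfl⟩)
          (inj_openEmb i).isOpen_range
        exact ⟨b, hb, ⟨_, hy⟩, hs⟩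
      choose b hb hne hs using this
      refine Cardinal.mk_le_of_injective (f := fun i => (⟨b i, hb i⟩ : B)) ?_
      intro i j hij
      have hij : b i = b j := congrArg Subtype.val hij
      obtain ⟨x, hx⟩ := hne i
      obtain ⟨y, rfl⟩ := hs i hx
      rw [hij] at hx
      obtain ⟨z, hz⟩ := hs j hx
      exact (inj_eq hz).symm
    by_contra hlt
    push Not at hlt
    have hs : ∀ b : B, ∃ s : Finset Λ, bp ∈ b.1 → (∀ t ∈ s, t ∈ T) ∧
        ((⋂ t ∈ s, A t) \ {i | ∀ y, inj i y ∈ b.1}).Finite := by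
      intro b
      by_cases hb : bp ∈ b.1
      · obtain ⟨n, hn, hF⟩ := OO_sub (hB.isOpen b.2) hb
        obtain ⟨s, hs⟩ := (mem_FT _ _ _).1 hF
        exact ⟨s, fun _ => hs⟩
      · exact ⟨∅, fun h => absurd h hb⟩
    choose s hs using hs
    have hU : #(⋃ b, (s b : Set Λ)) < #T := by
      rw [hT]
      refine lt_of_le_of_lt ?_ hlt
      refine (Cardinal.mk_iUnion_le_sum_mk).trans ?_
      calc Cardinal.sum (fun b : B => #(s b : Set Λ)) ≤ Cardinal.sum (fun _ : B => ℵ₀) :=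
            Cardinal.sum_le_sum _ _ fun b => Cardinal.mk_le_aleph0
        _ = #B := by simp [hι.trans hιB]
    obtain ⟨t, htT, ht⟩ : ∃ t ∈ T, t ∉ ⋃ b, (s b : Set Λ) := by
      by_contra! hh
      exact absurd (Cardinal.mk_le_mk_of_subset hh) (not_le.2 hU)
    obtain ⟨b, hb, hbp, hsub⟩ := hB.exists_subset_of_mem_open
      (bp_mem_OO (Y := Y) (F := FT A T) 0 (A t)) (OO_open 0 _ (FT_self A T t htT))
    have hfull : {i | ∀ y, inj i y ∈ b} ⊆ A t := by
      rw [← OO_full (Y := Y) (F := FT A T) 0 (A t)]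
      exact fun i hi y => hsub (hi y)
    obtain ⟨h1, h2⟩ := hs ⟨b, hb⟩ hbp
    refine hA (s ⟨b, hb⟩) t ?_ (h2.subset (sdiff_subset_sdiff_right hfull))
    intro h
    exact ht (mem_iUnion.2 ⟨_, h⟩)

lemma pointed_homeo {F F' : Filter ι} (hY : ∀ i j, i ≠ j → IsEmpty ((Y i).Y ≃ₜ (Y j).Y))
    (h : Wdg Y F ≃ₜ Wdg Y F') (hb : h bp = bp) : F ≤ F' := by
  have hb' : h.symm bp = bp := by rw [← hb, h.symm_apply_apply]
  -- the image of each block is inside a block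
  have block : ∀ i, h '' range (inj i) = range (inj i) := by
    intro i
    have hc : IsConnected (h '' range (inj i)) :=
      (isConnected_range (inj_openEmb i).continuous).image _ h.continuous.continuousOn
    have hbn : bp ∉ h '' range (inj i) := by
      rintro ⟨_, ⟨y, rfl⟩, hy⟩
      rw [← hb] at hy
      exact inj_ne i y (h.injective hy)
    obtain ⟨x, hx⟩ := hc.nonempty
    rcases wdg_cases x with rfl | ⟨j, y, rfl⟩
    · exact absurd hx hbn
    have h1 := conn_in_block _ hc.isPreconnected hbn j y hx
    have hc' : IsConnected (h.symm '' range (inj j)) :=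
      (isConnected_range (inj_openEmb j).continuous).image _ h.symm.continuous.continuousOn
    have hbn' : bp ∉ h.symm '' range (inj j) := by
      rintro ⟨_, ⟨y, rfl⟩, hy⟩
      rw [← hb'] at hy
      exact inj_ne j y (h.symm.injective hy)
    obtain ⟨_, ⟨w, rfl⟩, hw⟩ := hx
    have h2 := conn_in_block _ hc'.isPreconnected hbn' i w ⟨inj j y, ⟨y, rfl⟩, by
      rw [← hw, h.symm_apply_apply]⟩
    have heq : h '' range (inj i) = range (inj j) := by
      refine Subset.antisymm h1 ?_
      intro z hz
      exact ⟨h.symm z, h2 ⟨z, hz, rfl⟩, h.apply_symm_apply z⟩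
    by_cases hij : i = j
    · subst hij; exact heq
    · exact ((hY i j hij).false
        (((inj_openEmb i).isEmbedding.toHomeomorph.trans (h.image _)).trans
          ((Homeomorph.setCongr heq).trans (inj_openEmb j).isEmbedding.toHomeomorph.symm))).elim
  intro B hB
  have ho : IsOpen (h.symm '' OO 0 B : Set (Wdg Y F)) := h.symm.isOpenMap _ (OO_open 0 B hB)
  obtain ⟨n, -, hn⟩ := OO_sub ho ⟨bp, bp_mem_OO _ _, hb'⟩
  refine Filter.mem_of_superset hn ?_
  intro i hi
  rw [← OO_full (Y := Y) (F := F') 0 B]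
  intro y
  obtain ⟨_, ⟨w, rfl⟩, hw⟩ : inj i y ∈ h '' range (inj i) := by rw [block i]; exact ⟨y, rfl⟩
  obtain ⟨z, hz, hzw⟩ := hi w
  rw [← hw, ← hzw, h.apply_symm_apply]
  exact hz

end filt

lemma main_family {ι : Type} [Infinite ι] (Y : ι → Blk)
    (hY : ∀ i j, i ≠ j → IsEmpty ((Y i).Y ≃ₜ (Y j).Y)) (lam : Cardinal.{0})
    (h1 : #ι ≤ lam) (h2 : lam ≤ 2 ^ #ι) :
    ∃ (J : Type) (Φ : J → Filter ι), #J = 2 ^ lam ∧ (∀ j i, {i}ᶜ ∈ Φ j) ∧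
      (∀ j, tweight (Wdg Y (Φ j)) = lam) ∧
      ∀ j j', j ≠ j' → IsEmpty (Wdg Y (Φ j) ≃ₜ Wdg Y (Φ j')) := by
  have hι : ℵ₀ ≤ #ι := Cardinal.aleph0_le_mk ι
  have hl : ℵ₀ ≤ lam := hι.trans h1
  have hΛ : #(lam.out ⊕ lam.out) = lam := by
    simp [Cardinal.add_eq_self hl]
  obtain ⟨A, hA⟩ := exists_indep ι (lam.out ⊕ lam.out) (by rw [hΛ]; exact h2)
  let T : Set lam.out → Set (lam.out ⊕ lam.out) := fun S => range Sum.inl ∪ Sum.inr '' S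
  have hTinj : Function.Injective T := by
    intro S S' h
    ext x
    have := Set.ext_iff.1 h (Sum.inr x)
    simpa [T] using this
  have hTc : ∀ S, #(T S) = #(lam.out ⊕ lam.out) := by
    intro S
    apply le_antisymm (Cardinal.mk_set_le _)
    rw [hΛ]
    calc lam = #(range (Sum.inl : lam.out → lam.out ⊕ lam.out)) := by
          rw [Cardinal.mk_range_eq _ Sum.inl_injective, Cardinal.mk_out]
      _ ≤ _ := Cardinal.mk_le_mk_of_subset subset_union_left
  let Ψ : Set lam.out → Filter ι := fun S => FT A (T S)
  let st : Setoid (Set lam.out) :=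
    { r := fun S S' => Nonempty (Wdg Y (Ψ S) ≃ₜ Wdg Y (Ψ S'))
      iseqv := ⟨fun S => ⟨Homeomorph.refl _⟩, fun ⟨h⟩ => ⟨h.symm⟩, fun ⟨h⟩ ⟨h'⟩ => ⟨h.trans h'⟩⟩ }
  have hrep : ∀ S, Nonempty (Wdg Y (Ψ S) ≃ₜ Wdg Y (Ψ (Quotient.mk st S).out)) := fun S =>
    Setoid.symm (Quotient.mk_out (s := st) S)
  let g : Set lam.out → Quotient st × Option (Σ i, (Y i).Y) := fun S =>
    (Quotient.mk st S, (hrep S).some bp)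
  have hg : Function.Injective g := by
    intro S S' h
    have aux : ∀ (q q' : Quotient st) (f : Wdg Y (Ψ S) ≃ₜ Wdg Y (Ψ q.out))
        (f' : Wdg Y (Ψ S') ≃ₜ Wdg Y (Ψ q'.out)), q = q' →
        (show Option (Σ i, (Y i).Y) from f bp) = f' bp → S = S' := by
      intro q q' f f' hq hb
      subst hq
      have hb : f bp = f' bp := hb
      have e1 : (f.trans f'.symm) bp = bp := by simp [hb]
      have e2 : (f'.trans f.symm) bp = bp := by simp [← hb]
      have : Ψ S = Ψ S' := le_antisymm (pointed_homeo hY _ e1) (pointed_homeo hY _ e2)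
      exact hTinj (FT_inj A hA this)
    exact aux _ _ _ _ (congrArg Prod.fst h) (congrArg Prod.snd h)
  have hcard : #(Set lam.out) ≤ #(Quotient st) * #ι := by
    have := Cardinal.mk_le_of_injective hg
    rw [Cardinal.mk_prod, Cardinal.lift_id, Cardinal.lift_id] at this
    rwa [show #(Option (Σ i, (Y i).Y)) = #ι from wdg_card (Y := Y) (F := ⊥)] at this
  have hset : #(Set lam.out) = 2 ^ lam := by rw [Cardinal.mk_set, Cardinal.mk_out]
  refine ⟨Quotient st, fun q => Ψ q.out, ?_, fun j i => FT_compl _ _ _, fun j => ?_, ?_⟩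
  · apply le_antisymm
    · rw [← hset]; exact Cardinal.mk_quotient_le
    · rw [hset] at hcard
      by_contra hlt
      push Not at hlt
      have : #ι < 2 ^ lam := h1.trans_lt (Cardinal.cantor lam)
      exact absurd hcard (not_le.2 (Cardinal.mul_lt_of_lt (hl.trans (Cardinal.cantor lam).le) hlt this))
  · have := weight_FT (Y := Y) A hA (T j.out) (hTc _) (by rw [hΛ]; exact h1)
    rw [hΛ] at this
    exact this
  · intro q q' hne
    refine ⟨fun h => hne ?_⟩
    rw [← Quotient.out_eq q, ← Quotient.out_eq q']
    exact Quotient.sound ⟨h⟩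

noncomputable def KB : Blk where
  Y := KK
  top := inferInstance
  t2 := inferInstance
  conn := inferInstance
  lc := inferInstance
  sc := inferInstance
  cnt := inferInstance
  V := KE 1
  isEnd := KE_isEnd 1 (by simp) (by simp)

lemma wdg_sc {ι : Type} [Countable ι] (Y : ι → Blk) : SecondCountableTopology (Wdg Y ⊥) := by
  refine (TopologicalSpace.isTopologicalBasis_of_isOpen_of_nhds
    (s := (⋃ i, (fun b => inj i '' b) '' TopologicalSpace.countableBasis (Y i).Y) ∪
      range fun n => OO n ∅) ?_ ?_).secondCountableTopology ?_
  · rintro _ (h | ⟨n, rfl⟩)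
    · simp only [mem_iUnion] at h
      obtain ⟨i, b, hb, rfl⟩ := h
      exact (inj_openEmb i).isOpenMap _ (TopologicalSpace.isOpen_of_mem_countableBasis hb)
    · exact OO_open n ∅ trivial
  · intro x U hx hU
    rcases wdg_cases x with rfl | ⟨i, y, rfl⟩
    · obtain ⟨n, hn, -⟩ := OO_sub hU hx
      refine ⟨_, Or.inr ⟨n, rfl⟩, bp_mem_OO _ _, Subset.trans ?_ hn⟩
      intro z hz i y e
      rcases hz i y e with h | h
      · exact absurd h (by simp)
      · exact Or.inr h
    · obtain ⟨b, hb, hy, hbU⟩ := (TopologicalSpace.isBasis_countableBasis (Y i).Y).exists_subset_of_mem_open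
        (show y ∈ inj i ⁻¹' U from hx) (hU.preimage (inj_openEmb i).continuous)
      exact ⟨_, Or.inl (mem_iUnion.2 ⟨i, b, hb, rfl⟩), ⟨y, hy, rfl⟩, image_subset_iff.2 hbU⟩
  · exact (countable_iUnion fun i => (TopologicalSpace.countable_countableBasis _).image _).union
      (countable_range _)

abbrev Wn (n : ℕ) : Type := Wdg (fun _ : Fin (n + 2) => KB) ⊥

noncomputable def BB (n : ℕ) : Blk where
  Y := Wn n
  top := inferInstance
  t2 := wdg_t2 fun _ => Filter.mem_bot
  conn := inferInstance
  lc := inferInstance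
  sc := wdg_sc _
  cnt := inferInstance
  V := fun m => inj 0 '' (show Set KB.Y from KE 2 m)
  isEnd := wdg_end (fun _ => Filter.mem_bot) 0 _ (KE_isEnd 2 (by simp) (by simp)) (KE_disj 1 2 (by simp))

lemma BB_end : ∃ V' : ℕ → Set (BB 0).Y, IsEnd V' ∧ Disjoint ((BB 0).V 0) (V' 0) :=
  ⟨fun m => (inj 0 '' (show Set KB.Y from KE 3 m) : Set (Wn 0)),
    wdg_end (fun _ => Filter.mem_bot) 0 _ (KE_isEnd 3 (by simp) (by simp)) (KE_disj 1 3 (by simp)),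
    (disjoint_image_iff (inj_inj 0)).2 (KE_disj 2 3 (by simp))⟩

def Cut (m : ℕ) (X : Type) [TopologicalSpace X] : Prop :=
  ∃ x : X, ∃ f : X → Fin m, ContinuousOn f {x}ᶜ ∧ ∀ k, ∃ y, y ≠ x ∧ f y = k

lemma Cut.homeo {m : ℕ} {X X' : Type} [TopologicalSpace X] [TopologicalSpace X'] (h : X ≃ₜ X')
    (hc : Cut m X) : Cut m X' := by
  obtain ⟨x, f, hf, hs⟩ := hc
  refine ⟨h x, f ∘ h.symm, hf.comp h.symm.continuous.continuousOn ?_, ?_⟩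
  · intro y hy hy'
    apply hy
    have : h.symm y = x := hy'
    rw [← this]; simp
  · intro k
    obtain ⟨y, hy, hk⟩ := hs k
    exact ⟨h y, fun h' => hy (h.injective h'), by simpa using hk⟩

lemma cut_self (n : ℕ) : Cut (n + 2) (Wn n) := by
  refine ⟨bp, fun x => match (show Option (Σ _ : Fin (n+2), KB.Y) from x) with
    | none => 0
    | some q => q.1, ?_, ?_⟩
  · intro x hx
    rcases wdg_cases x with rfl | ⟨i, y, rfl⟩
    · exact absurd rfl hx
    apply ContinuousAt.continuousWithinAt
    apply ContinuousAt.congr (f := fun _ => i) continuousAt_const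
    filter_upwards [(inj_openEmb i).isOpen_range.mem_nhds (mem_range_self y)]
    rintro _ ⟨z, rfl⟩
    rfl
  · intro k
    exact ⟨inj k (Classical.arbitrary KB.Y), inj_ne _ _, rfl⟩

lemma cut_le (n m : ℕ) (h : Cut m (Wn n)) : m ≤ n + 2 := by
  classical
  obtain ⟨x, f, hf, hs⟩ := h
  rcases wdg_cases x with rfl | ⟨i, y, rfl⟩
  · have hsurj : Function.Surjective
        (fun i : Fin (n + 2) => f (inj i (Classical.arbitrary KB.Y))) := by
      intro k
      obtain ⟨y, hy, hk⟩ := hs k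
      rcases wdg_cases y with rfl | ⟨i, y, rfl⟩
      · exact absurd rfl hy
      refine ⟨i, ?_⟩
      rw [← hk]
      refine (isConnected_range (inj_openEmb i).continuous).isPreconnected.constant
        (hf.mono ?_) ⟨_, rfl⟩ ⟨_, rfl⟩
      rintro _ ⟨z, rfl⟩
      exact inj_ne _ _
    simpa using Fintype.card_le_of_surjective _ hsurj
  · have hp : IsPreconnected ({inj i y}ᶜ : Set (Wn n)) := by
      have := wdg_preconn (Y := fun _ : Fin (n + 2) => KB) (F := ⊥)
        (fun j => if j = i then ({y}ᶜ : Set KK) else (Set.univ : Set KK)) ?_ ?_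
      · convert this using 1
        ext z
        constructor
        · rintro hz j w rfl
          by_cases hj : j = i
          · subst hj
            simp only [if_true]
            intro hw
            exact hz (by rw [show w = y from hw]; rfl)
          · simp only [hj, if_false]
            trivial
        · rintro hz rfl
          have := hz i y rfl
          simp only [if_true] at this
          exact this rfl
      · intro j
        by_cases hj : j = i
        · simp only [hj, if_true]
          exact (KK_compl y).isPreconnected
        · simp only [hj, if_false]
          exact isPreconnected_univ (α := KK)
      · intro j m
        obtain ⟨w, hw, hne⟩ := KE_diff 1 (by simp) m y
        refine ⟨w, hw, ?_⟩
        by_cases hj : j = i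
        · simp only [hj, if_true]
          exact hne
        · simp only [hj, if_false]
          trivial
    by_contra hm
    obtain ⟨y0, h0, e0⟩ := hs ⟨0, by omega⟩
    obtain ⟨y1, h1, e1⟩ := hs ⟨1, by omega⟩
    have := hp.constant hf h0 h1
    rw [e0, e1] at this
    simp at this

lemma BB_ne (i j : ℕ) (h : i ≠ j) : IsEmpty ((BB i).Y ≃ₜ (BB j).Y) := by
  refine ⟨fun e => h ?_⟩
  have e' : Wn i ≃ₜ Wn j := e
  have h1 := cut_le _ _ ((cut_self i).homeo e')
  have h2 := cut_le _ _ ((cut_self j).homeo e'.symm)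
  omega

lemma sc_of_tweight (X : Type) [TopologicalSpace X] (h : tweight X = ℵ₀) :
    SecondCountableTopology X := by
  have hne : { c : Cardinal | ∃ B : Set (Set X), TopologicalSpace.IsTopologicalBasis B ∧ #B = c }.Nonempty :=
    ⟨_, _, TopologicalSpace.isTopologicalBasis_opens, rfl⟩
  obtain ⟨B, hB, hc⟩ := csInf_mem hne
  have : #B = ℵ₀ := hc.trans h
  exact hB.secondCountableTopology (Cardinal.le_aleph0_iff_set_countable.1 this.le)

lemma exists_blocks : ∃ (J : Type) (C : J → Blk), #J = Cardinal.continuum ∧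
    ∀ i j, i ≠ j → IsEmpty ((C i).Y ≃ₜ (C j).Y) := by
  obtain ⟨J, Φ, hJ, hΦ, hw, hne⟩ := main_family BB BB_ne ℵ₀ (by simp)
    (by simpa using (Cardinal.cantor ℵ₀).le)
  obtain ⟨V', hV', hd⟩ := BB_end
  refine ⟨J, fun j =>
    { Y := Wdg BB (Φ j)
      top := inferInstance
      t2 := wdg_t2 (hΦ j)
      conn := inferInstance
      lc := inferInstance
      sc := sc_of_tweight _ (hw j)
      cnt := inferInstance
      V := fun n => inj 0 '' V' n
      isEnd := wdg_end (hΦ j) 0 V' hV' hd }, by rw [hJ]; simp, hne⟩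

lemma part1 (κ lam : Cardinal.{0}) (hκ : ℵ₀ ≤ κ) (hc : κ ≤ Cardinal.continuum)
    (h1 : κ ≤ lam) (h2 : lam ≤ 2 ^ κ) :
    ExistsNonHomeoFamily (2 ^ lam) (fun X t =>
      letI := t
      T2Space X ∧ ConnectedSpace X ∧ LocallyConnectedSpace X ∧
        #X = κ ∧ tweight X = lam) := by
  obtain ⟨J, C, hJ, hC⟩ := exists_blocks
  have : #κ.out ≤ #J := by rw [hJ, Cardinal.mk_out]; exact hc
  obtain ⟨e⟩ := this
  have : Infinite κ.out := Cardinal.infinite_iff.2 (by rw [Cardinal.mk_out]; exact hκ)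
  obtain ⟨I, Φ, hI, hΦ, hw, hne⟩ := main_family (fun i => C (e i))
    (fun i j h => hC _ _ fun h' => h (e.injective h')) lam (by simpa using h1) (by simpa using h2)
  refine ⟨I, fun i => Wdg (fun i => C (e i)) (Φ i), fun i => inferInstance, hI, fun i => ?_, hne⟩
  refine ⟨wdg_t2 (hΦ i), inferInstance, inferInstance, ?_, hw i⟩
  rw [wdg_card, Cardinal.mk_out]

lemma ub {A : Type} (n : Cardinal) (hA : #A ≤ n) (P : (X : Type) → TopologicalSpace X → Prop)
    (hP : ∀ X t, P X t → #X = ℵ₀) (c : A → TopologicalSpace ℕ)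
    (hc : ∀ t : TopologicalSpace ℕ, (∃ X t', P X t' ∧ Nonempty (@Homeomorph X ℕ t' t)) → ∃ a, c a = t) :
    NonHomeoUpperBound n P := by
  intro ι F t hF hne
  have he : ∀ i, Nonempty (F i ≃ ℕ) := fun i =>
    Cardinal.eq.1 ((hP _ _ (hF i)).trans Cardinal.mk_nat.symm)
  have hh : ∀ i, ∃ a, Nonempty (@Homeomorph (F i) ℕ (t i) (c a)) := by
    intro i
    obtain ⟨e⟩ := he i
    let s : TopologicalSpace ℕ := TopologicalSpace.induced e.symm (t i)
    have hm : Nonempty (@Homeomorph (F i) ℕ (t i) s) :=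
      ⟨@Homeomorph.symm _ _ s (t i) (@Equiv.toHomeomorphOfIsInducing _ _ s (t i) e.symm
        (@Topology.IsInducing.mk _ _ s (t i) e.symm rfl))⟩
    obtain ⟨a, ha⟩ := hc s ⟨F i, t i, hF i, hm⟩
    exact ⟨a, ha ▸ hm⟩
  choose a ha using hh
  refine (Cardinal.mk_le_of_injective (f := a) ?_).trans hA
  intro i j hij
  by_contra hn
  obtain ⟨h⟩ := ha i
  obtain ⟨h'⟩ := ha j
  rw [← hij] at h'
  exact (hne i j hn).false (@Homeomorph.trans _ _ _ (t i) (c (a i)) (t j) h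
    (@Homeomorph.symm _ _ (t j) (c (a i)) h'))

end S13

/-- Theorem 3: if `κ < 𝔠` and `κ ≤ λ ≤ 2 ^ κ` (with `κ, λ` infinite), then there exist
`2 ^ λ` mutually non-homeomorphic connected, locally connected Hausdorff spaces of
cardinality `κ` and weight `λ`.  In particular there exist precisely `2 ^ 𝔠` countably
infinite connected, locally connected Hausdorff spaces up to homeomorphism, and
precisely `𝔠` countably infinite connected, locally connected, second countable
Hausdorff spaces up to homeomorphism. -/
theorem stmt13 (κ lam : Cardinal) (hκ : ℵ₀ ≤ κ) (hc : κ < Cardinal.continuum)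
    (h1 : κ ≤ lam) (h2 : lam ≤ 2 ^ κ) :
    ExistsNonHomeoFamily (2 ^ lam) (fun X t =>
      letI := t
      T2Space X ∧ ConnectedSpace X ∧ LocallyConnectedSpace X ∧
        #X = κ ∧ tweight X = lam)
    ∧ PreciselyNonHomeo ((2 : Cardinal) ^ Cardinal.continuum) (fun X t =>
        letI := t
        T2Space X ∧ ConnectedSpace X ∧ LocallyConnectedSpace X ∧ #X = ℵ₀)
    ∧ PreciselyNonHomeo Cardinal.continuum (fun X t =>
        letI := t
        T2Space X ∧ ConnectedSpace X ∧ LocallyConnectedSpace X ∧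
          SecondCountableTopology X ∧ #X = ℵ₀) := by
  refine ⟨S13.part1 κ lam hκ hc.le h1 h2, ⟨?_, ?_⟩, ?_, ?_⟩
  · obtain ⟨ι, F, t, hι, hP, hne⟩ := S13.part1 ℵ₀ Cardinal.continuum le_rfl
      Cardinal.aleph0_le_continuum Cardinal.aleph0_le_continuum (by simp)
    exact ⟨ι, F, t, hι, fun i => ⟨(hP i).1, (hP i).2.1, (hP i).2.2.1, (hP i).2.2.2.1⟩, hne⟩
  · refine S13.ub (A := Set (Set ℕ)) _ ?_ _ (fun X t h => h.2.2.2)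
      (fun B => TopologicalSpace.generateFrom B) ?_
    · simp
    · intro t _
      exact ⟨{U | IsOpen[t] U}, TopologicalSpace.generateFrom_setOfPred_isOpen t⟩
  · obtain ⟨ι, F, t, hι, hP, hne⟩ := S13.part1 ℵ₀ ℵ₀ le_rfl
      Cardinal.aleph0_le_continuum le_rfl (Cardinal.cantor _).le
    refine ⟨ι, F, t, by simpa using hι, fun i => ?_, hne⟩
    letI := t i
    exact ⟨(hP i).1, (hP i).2.1, (hP i).2.2.1, S13.sc_of_tweight _ (hP i).2.2.2.2, (hP i).2.2.2.1⟩
  · refine S13.ub (A := ℕ → Set ℕ) _ ?_ _ (fun X t h => h.2.2.2.2)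
      (fun B => TopologicalSpace.generateFrom (range B)) ?_
    · simp
    · rintro t ⟨X, t', hX, ⟨h⟩⟩
      letI := t'
      letI := t
      have h' : X ≃ₜ ℕ := h
      have := hX.2.2.2.1
      have : SecondCountableTopology ℕ := h'.symm.isEmbedding.secondCountableTopology
      obtain ⟨f, hf⟩ := (TopologicalSpace.countable_countableBasis ℕ).exists_eq_range
        (by
          obtain ⟨b, hb, -⟩ := (TopologicalSpace.isBasis_countableBasis ℕ).exists_subset_of_mem_open
            (Set.mem_univ 0) isOpen_univ
          exact ⟨b, hb⟩)
      refine ⟨f, ?_⟩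
      rw [← hf]
      exact (TopologicalSpace.isBasis_countableBasis ℕ).eq_generateFrom.symm
end

section
/- Let κ and λ be cardinals with 𝔠 ≤ κ ≤ λ ≤ 2^κ, where 𝔠 = 2^{ℵ₀}. Then there exist 2^λ mutually non-homeomorphic connected, totally pathwise disconnected, nowhere locally connected, almost metrizable topological spaces of cardinality κ and weight λ. -/
open Cardinal Set Topology

/-- A space is totally pathwise disconnected iff every continuous map from `[0,1]` into
it is constant. -/
def TotallyPathDisconnected (X : Type) [TopologicalSpace X] : Prop :=
  ∀ f : unitInterval → X, Continuous f → ∀ s t, f s = f t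

/-- A space is nowhere locally connected iff every point has a neighborhood containing
no connected neighborhood of that point. -/
def NowhereLocallyConnected (X : Type) [TopologicalSpace X] : Prop :=
  ∀ x : X, ∃ U ∈ nhds x, ∀ V ∈ nhds x, IsConnected V → ¬ V ⊆ U


theorem inj_sel {ι α : Type} (S : ι → Set α) (h : ∀ i, #ι ≤ #(S i)) :
    ∃ g : ι → α, Function.Injective g ∧ ∀ i, g i ∈ S i := by
  obtain ⟨r, wo, hr⟩ := Cardinal.exists_ord_eq ι
  have key : ∀ (i : ι) (g : {j // r j i} → α), ∃ a ∈ S i, ∀ j, g j ≠ a := by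
    intro i g
    by_contra hcon
    push Not at hcon
    have h1 : S i ⊆ range g := fun a ha => by
      obtain ⟨j, hj⟩ := hcon a ha
      exact ⟨j, hj⟩
    have h2 : #(S i) ≤ #{j // r j i} := (mk_le_mk_of_subset h1).trans mk_range_le
    have h3 : #{j // r j i} < #ι := Cardinal.card_typein_lt (r := r) i hr
    exact absurd (h i) (not_le.2 (h2.trans_lt h3))
  choose F hF1 hF2 using key
  have wf : WellFounded r := wo.wf
  let g : ι → α := wf.fix (fun i ih => F i (fun j => ih j.1 j.2))
  have hg : ∀ i, g i = F i (fun j => g j.1) := fun i => wf.fix_eq _ i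
  refine ⟨g, ?_, fun i => by rw [hg]; exact hF1 _ _⟩
  have hne : ∀ i j, r j i → g j ≠ g i := by
    intro i j hji
    rw [hg i]
    exact hF2 i (fun j => g j.1) ⟨j, hji⟩
  intro i j hij
  rcases trichotomous_of r i j with h | h | h
  · exact absurd hij (hne _ _ h)
  · exact h
  · exact absurd hij.symm (hne _ _ h)

theorem card_closed_le : #{K : Set (ℝ × ℝ) // IsClosed K} ≤ 𝔠 := by
  let B := TopologicalSpace.countableBasis (ℝ × ℝ)
  have hB := TopologicalSpace.isBasis_countableBasis (ℝ × ℝ)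
  have hc : Countable B := (TopologicalSpace.countable_countableBasis (ℝ × ℝ)).to_subtype
  let φ : {K : Set (ℝ × ℝ) // IsClosed K} → Set B := fun K => {b | (b : Set (ℝ × ℝ)) ⊆ K.1ᶜ}
  have hφ : Function.Injective φ := by
    intro K L hKL
    have hmem : ∀ (K L : {K : Set (ℝ × ℝ) // IsClosed K}), φ K = φ L → L.1 ⊆ K.1 := by
      intro K L h x hx
      by_contra hxK
      obtain ⟨b, hb, hxb, hbK⟩ := hB.exists_subset_of_mem_open (show x ∈ K.1ᶜ from hxK) K.2.isOpen_compl
      have h1 : (⟨b, hb⟩ : B) ∈ φ K := hbK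
      rw [h] at h1
      exact h1 hxb hx
    exact Subtype.ext (Subset.antisymm (hmem L K hKL.symm) (hmem K L hKL))
  calc #{K : Set (ℝ × ℝ) // IsClosed K} ≤ #(Set B) := mk_le_of_injective hφ
    _ = 2 ^ #B := mk_set
    _ ≤ 2 ^ ℵ₀ := Cardinal.power_le_power_left two_ne_zero (mk_le_aleph0_iff.2 hc)
    _ = 𝔠 := two_power_aleph0

theorem card_proj (K : Set (ℝ × ℝ)) (hK : IsClosed K) (hu : ¬ (Prod.fst '' K).Countable) :
    𝔠 ≤ #(Prod.fst '' K : Set ℝ) := by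
  have h1 : ∃ n : ℕ, ¬ (Prod.fst '' (K ∩ Metric.closedBall 0 n)).Countable := by
    by_contra hcon
    push Not at hcon
    apply hu
    refine (countable_iUnion hcon).mono ?_
    rintro _ ⟨x, hx, rfl⟩
    obtain ⟨n, hn⟩ := exists_nat_ge (dist x 0)
    exact mem_iUnion.2 ⟨n, x, ⟨hx, hn⟩, rfl⟩
  obtain ⟨n, hn⟩ := h1
  have hcl : IsClosed (Prod.fst '' (K ∩ Metric.closedBall (0 : ℝ × ℝ) n)) :=
    (((isCompact_closedBall (0 : ℝ × ℝ) (n : ℝ)).inter_left hK).image continuous_fst).isClosed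
  obtain ⟨F, hF, -, hinj⟩ := hcl.exists_nat_bool_injection_of_not_countable hn
  have h2 : #(ℕ → Bool) ≤ #(Prod.fst '' K : Set ℝ) := by
    refine mk_le_of_injective (f := fun x => ⟨F x, ?_⟩) ?_
    · obtain ⟨y, hy, hy2⟩ := hF ⟨x, rfl⟩
      exact ⟨y, hy.1, hy2⟩
    · intro x y hxy
      exact hinj (congrArg Subtype.val hxy)
  simpa using h2

theorem exists_f0 : ∃ f : ℝ → ℝ, ∀ K : Set (ℝ × ℝ), IsClosed K → ¬ (Prod.fst '' K).Countable →
    ∃ x, (x, f x) ∈ K := by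
  let ι := {K : {K : Set (ℝ × ℝ) // IsClosed K} // ¬ (Prod.fst '' K.1).Countable}
  obtain ⟨g, hg, hgm⟩ := inj_sel (ι := ι) (fun i => Prod.fst '' i.1.1) (fun i =>
    ((mk_subtype_le _).trans card_closed_le).trans (card_proj _ i.1.2 i.2))
  have hy : ∀ i, ∃ y, (g i, y) ∈ i.1.1 := by
    intro i
    obtain ⟨⟨a, b⟩, h, h2⟩ := hgm i
    exact ⟨b, by rw [← h2]; exact h⟩
  choose y hy using hy
  refine ⟨Function.extend g y 0, fun K hK hu => ⟨g ⟨⟨K, hK⟩, hu⟩, ?_⟩⟩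
  rw [hg.extend_apply]
  exact hy ⟨⟨K, hK⟩, hu⟩

/-- strongly Darboux, connected graph over intervals -/
theorem exists_f : ∃ f : ℝ → ℝ, (∀ a b y : ℝ, a < b → ∃ x, a < x ∧ x < b ∧ f x = y) ∧
    ∀ J : Set ℝ, J.OrdConnected → IsPreconnected ((fun x => (x, f x)) '' J) := by
  obtain ⟨f, hf⟩ := exists_f0
  have hD : ∀ a b y : ℝ, a < b → ∃ x, a < x ∧ x < b ∧ f x = y := by
    intro a b y hab
    obtain ⟨c, hac, hcb⟩ := exists_between hab
    obtain ⟨d, hcd, hdb⟩ := exists_between hcb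
    obtain ⟨x, hx⟩ := hf (Icc c d ×ˢ {y}) (isClosed_Icc.prod isClosed_singleton) (by
      rw [Set.fst_image_prod _ (singleton_nonempty y)]
      intro hc
      have := (hc.mono Ioo_subset_Icc_self).dense_compl ℝ
      obtain ⟨z, hz1, hz2⟩ := this.exists_mem_open isOpen_Ioo (nonempty_Ioo.2 hcd)
      exact hz1 hz2)
    obtain ⟨⟨h1, h2⟩, h3⟩ := hx
    exact ⟨x, by simp only at h1; linarith, by simp only at h2; linarith, h3⟩
  refine ⟨f, hD, ?_⟩
  -- main claim
  have main : ∀ (a b : ℝ) (U V : Set (ℝ × ℝ)), IsOpen U → IsOpen V → a < b →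
      (∀ x ∈ Icc a b, (x, f x) ∈ U ∪ V) →
      ((a, f a) ∈ U ∧ (b, f b) ∈ V) → ∃ x ∈ Icc a b, (x, f x) ∈ U ∩ V := by
    rintro a b U V hU hV hab hcov ⟨haU, hbV⟩
    by_contra hcon
    push Not at hcon
    have hdisj : ∀ x ∈ Ioo a b, ∀ y, (x, y) ∉ U ∩ V := by
      intro x hx y hxy
      have hO : IsOpen {z : ℝ | (z, y) ∈ U ∩ V ∧ z ∈ Ioo a b} :=
        ((hU.inter hV).preimage (by fun_prop : Continuous fun z : ℝ => (z, y))).inter isOpen_Ioo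
      obtain ⟨ε, hε, hb⟩ := Metric.isOpen_iff.1 hO x ⟨hxy, hx⟩
      obtain ⟨z, hz1, hz2, hz3⟩ := hD (x - ε) (x + ε) y (by linarith)
      have hz := hb (show z ∈ Metric.ball x ε by
        rw [Metric.mem_ball, Real.dist_eq, abs_lt]; constructor <;> linarith)
      exact hcon z (Ioo_subset_Icc_self hz.2) (by rw [hz3]; exact hz.1)
    have hcount : (Prod.fst '' ((Icc a b ×ˢ (Set.univ : Set ℝ)) ∩ (U ∪ V)ᶜ)).Countable := by
      by_contra hnc
      obtain ⟨x, hx⟩ := hf _ ((isClosed_Icc.prod isClosed_univ).inter (hU.union hV).isClosed_compl) hnc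
      exact hx.2 (hcov x hx.1.1)
    have hP : IsOpen (Prod.fst '' U) := isOpenMap_fst U hU
    have hQ : IsOpen (Prod.fst '' V) := isOpenMap_fst V hV
    have hpc := isPreconnected_Ioo (a := a) (b := b) _ _ hP hQ (by
      intro x hx
      rcases hcov x (Ioo_subset_Icc_self hx) with h | h
      · exact Or.inl ⟨_, h, rfl⟩
      · exact Or.inr ⟨_, h, rfl⟩) (by
        have hO : IsOpen {z : ℝ | (z, f a) ∈ U} :=
          hU.preimage (by fun_prop : Continuous fun z : ℝ => (z, f a))
        obtain ⟨ε, hε, hb⟩ := Metric.isOpen_iff.1 hO a haU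
        obtain ⟨z, hz1, hz2⟩ := exists_between (show a < min b (a + ε) by
          apply lt_min <;> linarith)
        refine ⟨z, ⟨hz1, hz2.trans_le (min_le_left _ _)⟩, (z, f a), hb ?_, rfl⟩
        have := hz2.trans_le (min_le_right _ _)
        rw [Metric.mem_ball, Real.dist_eq, abs_lt]; constructor <;> linarith) (by
        have hO : IsOpen {z : ℝ | (z, f b) ∈ V} :=
          hV.preimage (by fun_prop : Continuous fun z : ℝ => (z, f b))
        obtain ⟨ε, hε, hb'⟩ := Metric.isOpen_iff.1 hO b hbV
        obtain ⟨z, hz1, hz2⟩ := exists_between (show max a (b - ε) < b by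
          apply max_lt <;> linarith)
        refine ⟨z, ⟨(le_max_left _ _).trans_lt hz1, hz2⟩, (z, f b), hb' ?_, rfl⟩
        have := (le_max_right _ _).trans_lt hz1
        rw [Metric.mem_ball, Real.dist_eq, abs_lt]; constructor <;> linarith)
    obtain ⟨z, hz1, hz2, hz3, hz4⟩ := (hcount.dense_compl ℝ).exists_mem_open
      (isOpen_Ioo.inter (hP.inter hQ)) hpc
    obtain ⟨⟨_, y1⟩, hy1, rfl⟩ := hz3
    obtain ⟨⟨_, y2⟩, hy2, h⟩ := hz4
    simp only at h hz1 hz2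
    subst h
    rename_i z
    have hline : IsPreconnected ((fun y : ℝ => (z, y)) '' (Set.univ : Set ℝ)) :=
      isPreconnected_univ.image _ (by fun_prop)
    obtain ⟨q, ⟨y, -, rfl⟩, hq⟩ := hline U V hU hV (by
      rintro _ ⟨y, -, rfl⟩
      by_contra hn
      exact hz1 ⟨(z, y), ⟨⟨Ioo_subset_Icc_self hz2, mem_univ _⟩, hn⟩, rfl⟩)
      ⟨_, ⟨y1, mem_univ _, rfl⟩, hy1⟩ ⟨_, ⟨y2, mem_univ _, rfl⟩, hy2⟩
    exact hdisj z hz2 y hq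
  rintro J hJ U V hU hV hcov ⟨_, ⟨a, ha, rfl⟩, haU⟩ ⟨_, ⟨b, hb, rfl⟩, hbV⟩
  have hcov' : ∀ x ∈ J, (x, f x) ∈ U ∪ V := fun x hx => hcov ⟨x, hx, rfl⟩
  rcases lt_trichotomy a b with h | h | h
  · obtain ⟨x, hx, hxU⟩ := main a b U V hU hV h (fun x hx => hcov' x (hJ.out ha hb hx)) ⟨haU, hbV⟩
    exact ⟨_, ⟨x, hJ.out ha hb hx, rfl⟩, hxU⟩
  · subst h
    exact ⟨_, ⟨a, ha, rfl⟩, haU, hbV⟩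
  · obtain ⟨x, hx, hxU⟩ := main b a V U hV hU h
      (fun x hx => (hcov' x (hJ.out hb ha hx)).symm) ⟨hbV, haU⟩
    exact ⟨_, ⟨x, hJ.out hb ha hx, rfl⟩, hxU.symm⟩

/-! antitone sequences -/
abbrev AS (A : Type) [LinearOrder A] := {c : ℕ → A // Antitone c}

def LimV {A : Type} [LinearOrder A] (c : AS A) (a : A) : Prop := ∃ N, ∀ n, N ≤ n → c.1 n = a

theorem LimV.exists {A : Type} [LinearOrder A] [WellFoundedLT A] (c : AS A) : ∃ a, LimV c a := by
  have hne : (range c.1).Nonempty := ⟨c.1 0, 0, rfl⟩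
  obtain ⟨a, ⟨N, hN⟩, hmin⟩ := WellFounded.has_min (wellFounded_lt (α := A)) (range c.1) hne
  refine ⟨a, N, fun n hn => ?_⟩
  exact le_antisymm (hN ▸ c.2 hn) (not_lt.1 (hmin _ ⟨n, rfl⟩))

theorem LimV.le {A : Type} [LinearOrder A] {c : AS A} {a : A} (h : LimV c a) (n : ℕ) :
    a ≤ c.1 n := by
  obtain ⟨N, hN⟩ := h
  rw [← hN (max N n) (le_max_left _ _)]
  exact c.2 (le_max_right _ _)

theorem LimV.near1 {A : Type} [LinearOrder A] [TopologicalSpace A] [DiscreteTopology A]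
    {c : AS A} {a : A} (h : LimV c a) :
    ∃ W ∈ 𝓝 c, ∀ t ∈ W, t ≠ c → ∀ b, LimV t b → b < a := by
  obtain ⟨N, hN⟩ := h
  refine ⟨⋂ i ∈ Finset.range (N + 1), {t : AS A | t.1 i = c.1 i}, ?_, ?_⟩
  · rw [Filter.biInter_finset_mem]
    intro i _
    have hcont : Continuous fun t : AS A => t.1 i :=
      (continuous_apply i).comp continuous_subtype_val
    exact ((isOpen_discrete {c.1 i}).preimage hcont).mem_nhds rfl
  · intro t ht htc b hb
    simp only [mem_iInter, Finset.mem_range, mem_ofPred_eq] at ht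
    have hle : b ≤ a := by
      rw [← hN N le_rfl, ← ht N (by omega)]
      exact hb.le N
    refine lt_of_le_of_ne hle fun hba => htc ?_
    subst hba
    apply Subtype.ext
    funext n
    rcases Nat.lt_or_ge n (N + 1) with h | h
    · exact ht n h
    · rw [hN n (by omega)]
      refine le_antisymm ?_ (hb.le n)
      rw [← hN N le_rfl, ← ht N (by omega)]
      exact t.2 (by omega)

theorem LimV.near2 {A : Type} [LinearOrder A] [TopologicalSpace A] [DiscreteTopology A]
    {c : AS A} {a b : A} (h : LimV c a) (hb : b < a) (W : Set (AS A)) (hW : W ∈ 𝓝 c) :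
    ∃ t ∈ W, t ≠ c ∧ LimV t b := by
  let t : ℕ → AS A := fun k => ⟨fun n => if n < k then c.1 n else b, by
    intro m n hmn
    by_cases h1 : n < k
    · have h2 : m < k := by omega
      simp only [h1, h2, if_true]
      exact c.2 hmn
    · by_cases h2 : m < k
      · simp only [h1, h2, if_true, if_false]
        exact hb.le.trans (h.le m)
      · simp [h1, h2]⟩
  have ht : Filter.Tendsto t Filter.atTop (𝓝 c) := by
    rw [tendsto_subtype_rng, tendsto_pi_nhds]
    intro n
    apply tendsto_const_nhds.congr'
    filter_upwards [Filter.eventually_gt_atTop n] with k hk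
    simp [t, hk]
  obtain ⟨k, hk⟩ := (ht.eventually hW).exists
  refine ⟨t k, hk, ?_, k, fun n hn => ?_⟩
  · intro he
    have h1 : (t k).1 k = c.1 k := by rw [he]
    simp only [t, lt_irrefl, if_false] at h1
    exact absurd (h.le k) (not_le.2 (h1 ▸ hb))
  · simp [t, not_lt.2 hn]

theorem LimV.homeo_le {A : Type} [LinearOrder A] [WellFoundedLT A] [TopologicalSpace A]
    [DiscreteTopology A] (φ : AS A ≃ₜ AS A) (a : A) :
    ∀ c, LimV c a → ∀ b, LimV (φ c) b → a ≤ b := by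
  induction a using WellFoundedLT.induction with
  | ind a ih =>
    intro c hc b hb
    by_contra hlt
    push Not at hlt
    obtain ⟨W, hW, hWt⟩ := hb.near1
    obtain ⟨t, htW, htc, htb⟩ := hc.near2 hlt (φ ⁻¹' W) (φ.continuous.continuousAt hW)
    obtain ⟨b', hb'⟩ := LimV.exists (φ t)
    exact absurd (ih b hlt t htb b' hb') (not_le.2 (hWt _ htW (fun h => htc (φ.injective h)) b' hb'))

theorem LimV.homeo {A : Type} [LinearOrder A] [WellFoundedLT A] [TopologicalSpace A]
    [DiscreteTopology A] (φ : AS A ≃ₜ AS A) (a : A) (c) (hc : LimV (φ c) a) : LimV c a := by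
  obtain ⟨b, hb⟩ := LimV.exists c
  have h1 := LimV.homeo_le φ b c hb a hc
  have h2 := LimV.homeo_le φ.symm a (φ c) hc b (by simpa using hb)
  rwa [le_antisymm h2 h1]

theorem mk_AS (A : Type) [LinearOrder A] [WellFoundedLT A] [Infinite A] : #(AS A) ≤ #A := by
  have : #(AS A) ≤ #(List A × A) := by
    have h : ∀ c : AS A, ∃ p : List A × A, ∀ n, c.1 n = p.1.getD n p.2 := by
      intro c
      obtain ⟨a, N, hN⟩ := LimV.exists c
      refine ⟨(List.ofFn (fun i : Fin N => c.1 i), a), fun n => ?_⟩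
      rcases Nat.lt_or_ge n N with h | h
      · simp [List.getD, h]
      · simp [List.getD, hN n h, h]
    choose p hp using h
    refine mk_le_of_injective (f := p) fun c d h => Subtype.ext (funext fun n => ?_)
    rw [hp, hp, h]
  refine this.trans ?_
  rw [mk_prod, mk_list_eq_mk, lift_id, mul_eq_self (aleph0_le_mk A)]

/-- independent families -/
theorem exists_indep (A J : Type) [Infinite A] (hJ : #J ≤ 2 ^ #A) :
    ∃ I : J → Set A, ∀ (s : Finset J) (T : Set J), ∃ a, ∀ i ∈ s, (a ∈ I i ↔ i ∈ T) := by
  classical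
  have h1 : #(Finset A × Finset (Finset A)) = #A := by
    rw [mk_prod, lift_id, lift_id, mk_finset_of_infinite, mk_finset_of_infinite,
      mk_finset_of_infinite, mul_eq_self (aleph0_le_mk A)]
  obtain ⟨e⟩ := Cardinal.eq.1 h1
  rw [← mk_set] at hJ
  obtain ⟨Y⟩ := hJ
  refine ⟨fun j => {a | (e.symm a).1.filter (· ∈ Y j) ∈ (e.symm a).2}, fun s T => ?_⟩
  -- separating finite set
  have hsep : ∀ i j : J, ∃ x, i ≠ j → ¬ (x ∈ Y i ↔ x ∈ Y j) := by
    intro i j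
    by_cases h : i = j
    · exact ⟨Classical.arbitrary A, fun h' => absurd h h'⟩
    · have : Y i ≠ Y j := fun h' => h (Y.injective h')
      by_contra hcon
      push Not at hcon
      exact this (Set.ext fun x => (hcon x).2)
  choose x hx using hsep
  let F : Finset A := (s ×ˢ s).image (fun p => x p.1 p.2)
  let G : Finset (Finset A) := (s.filter (· ∈ T)).image (fun i => F.filter (· ∈ Y i))
  refine ⟨e (F, G), fun i hi => ?_⟩
  simp only [mem_ofPred_eq, Equiv.symm_apply_apply]
  constructor
  · intro h
    obtain ⟨j, hj, hji⟩ := Finset.mem_image.1 h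
    rw [Finset.mem_filter] at hj
    by_cases hij : i = j
    · rw [hij]; exact hj.2
    · exfalso
      have hF : x i j ∈ F := Finset.mem_image.2 ⟨(i, j), Finset.mk_mem_product hi hj.1, rfl⟩
      have := Finset.ext_iff.1 hji (x i j)
      simp only [Finset.mem_filter, hF, true_and] at this
      exact hx i j hij this.symm
  · intro h
    exact Finset.mem_image.2 ⟨i, Finset.mem_filter.2 ⟨hi, h⟩, rfl⟩


theorem metrizable_AS (A : Type) [LinearOrder A] [TopologicalSpace A] [DiscreteTopology A] :
    TopologicalSpace.MetrizableSpace (AS A) := by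
  have : TopologicalSpace.MetrizableSpace A := inferInstance
  have : TopologicalSpace.MetrizableSpace (ℕ → A) := inferInstance
  exact (IsEmbedding.subtypeVal (p := fun c : ℕ → A => Antitone c)).metrizableSpace
/-! one-point extension of a space by a filter -/
def OP {M : Type} [TopologicalSpace M] (_U : Filter M) : Type := Option M

def OP.inn {M : Type} [TopologicalSpace M] (U : Filter M) (m : M) : OP U := (some m : Option M)
def OP.pt {M : Type} [TopologicalSpace M] (U : Filter M) : OP U := (none : Option M)

instance OP.top {M : Type} [TopologicalSpace M] (U : Filter M) : TopologicalSpace (OP U) where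
  IsOpen O := IsOpen (OP.inn U ⁻¹' O) ∧ (OP.pt U ∈ O → OP.inn U ⁻¹' O ∈ U)
  isOpen_univ := ⟨isOpen_univ, fun _ => Filter.univ_mem⟩
  isOpen_inter s t hs ht := ⟨hs.1.inter ht.1, fun h => Filter.inter_mem (hs.2 h.1) (ht.2 h.2)⟩
  isOpen_sUnion S hS := by
    refine ⟨?_, ?_⟩
    · rw [preimage_sUnion]
      exact isOpen_biUnion fun t ht => (hS t ht).1
    · rintro ⟨t, ht, hn⟩
      exact Filter.mem_of_superset ((hS t ht).2 hn) fun x hx => ⟨t, ht, hx⟩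

namespace OP
variable {M : Type} [TopologicalSpace M] {U : Filter M}


theorem isOpen_iff' {O : Set (OP U)} :
    IsOpen O ↔ IsOpen (inn U ⁻¹' O) ∧ (pt U ∈ O → inn U ⁻¹' O ∈ U) := Iff.rfl

theorem inn_ne_pt (m : M) : inn U m ≠ pt U := fun h => Option.some_ne_none m h

theorem inn_inj : Function.Injective (inn U) := Option.some_injective M

theorem cases' (x : OP U) : x = pt U ∨ ∃ m, x = inn U m := by
  cases h : (x : Option M) with
  | none => exact Or.inl rfl
  | some m => exact Or.inr ⟨m, rfl⟩

theorem pre_image (s : Set M) : inn U ⁻¹' (inn U '' s) = s := preimage_image_eq _ inn_inj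

theorem isOpen_image {s : Set M} (hs : IsOpen s) : IsOpen (inn U '' s) := by
  rw [isOpen_iff', pre_image]
  refine ⟨hs, ?_⟩
  rintro ⟨m, -, h⟩
  exact absurd h (inn_ne_pt m)

theorem isOpenEmbedding : IsOpenEmbedding (inn U) :=
  .of_continuous_injective_isOpenMap
    ⟨fun _ h => h.1⟩ inn_inj (fun _ hs => isOpen_image hs)

theorem isOpen_insert {s : Set M} (hs : IsOpen s) (hU : s ∈ U) :
    IsOpen (insert (pt U) (inn U '' s)) := by
  have : inn U ⁻¹' (insert (pt U) (inn U '' s)) = s := by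
    ext m
    constructor
    · rintro (h | ⟨m', h, h'⟩)
      · exact absurd h (inn_ne_pt m)
      · rwa [← inn_inj h']
    · exact fun h => Or.inr ⟨m, h, rfl⟩
  rw [isOpen_iff', this]
  exact ⟨hs, fun _ => hU⟩

theorem mem_of_nhds {W : Set (OP U)} (h : W ∈ 𝓝 (pt U)) : inn U ⁻¹' W ∈ U := by
  obtain ⟨O, hOW, hO, hp⟩ := mem_nhds_iff.1 h
  exact Filter.mem_of_superset (hO.2 hp) fun m hm => hOW hm

theorem range_inn : range (inn U) = {pt U}ᶜ := by
  ext x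
  constructor
  · rintro ⟨m, rfl⟩
    exact inn_ne_pt m
  · intro h
    rcases cases' x with h' | ⟨m, rfl⟩
    · exact absurd h' h
    · exact ⟨m, rfl⟩

noncomputable def homeoCompl (U : Filter M) : M ≃ₜ ({pt U}ᶜ : Set (OP U)) :=
  (isOpenEmbedding (U := U)).isEmbedding.toHomeomorph.trans (Homeomorph.setCongr range_inn)

theorem almostMetrizable [TopologicalSpace.MetrizableSpace M]
    (hreg : ∀ s ∈ U, ∃ t ∈ U, IsOpen t ∧ closure t ⊆ s)
    (hg : ∃ t : ℕ → Set M, (∀ n, t n ∈ U) ∧ ⋂ n, t n = ∅) : AlmostMetrizable (OP U) := by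
  have hMo : IsOpen (range (inn U)) := isOpenEmbedding.isOpen_range
  -- regularity at the point
  have hr : ∀ K : Set (OP U), IsClosed K → pt U ∉ K →
      ∃ O : Set (OP U), IsOpen O ∧ pt U ∈ O ∧ ∃ O' : Set (OP U), IsOpen O' ∧ K ⊆ O' ∧
        Disjoint O O' := by
    intro K hK hp
    obtain ⟨t, htU, hto, htc⟩ := hreg _ (hK.isOpen_compl.2 hp)
    refine ⟨_, isOpen_insert hto htU, Or.inl rfl, inn U '' (closure t)ᶜ,
      isOpen_image isClosed_closure.isOpen_compl, ?_, ?_⟩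
    · intro x hx
      rcases cases' x with h' | ⟨m, rfl⟩
      · exact absurd (h' ▸ hx) hp
      · exact ⟨m, fun hm => htc hm hx, rfl⟩
    · rw [Set.disjoint_left]
      rintro x (h | ⟨m, hm, rfl⟩) ⟨m', hm', h'⟩
      · rw [h] at h'
        exact inn_ne_pt _ h'
      · rw [inn_inj h'] at hm'
        exact hm' (subset_closure hm)
  have hsep : ∀ H K : Set (OP U), IsClosed H → IsClosed K → Disjoint H K → pt U ∉ K →
      SeparatedNhds H K := by
    intro H K hH hK hd hp
    obtain ⟨O, hO, hpO, O', hO', hKO', hOO'⟩ := hr K hK hp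
    obtain ⟨V1, V2, hV1, hV2, hHV, hKV, hVd⟩ := normal_separation
      (hH.preimage isOpenEmbedding.continuous) (hK.preimage isOpenEmbedding.continuous)
      (hd.preimage (inn U))
    refine ⟨inn U '' V1 ∪ O, inn U '' V2 ∩ O', (isOpen_image hV1).union hO,
      (isOpen_image hV2).inter hO', ?_, ?_, ?_⟩
    · intro x hx
      rcases cases' x with h' | ⟨m, rfl⟩
      · exact Or.inr (h' ▸ hpO)
      · exact Or.inl ⟨m, hHV hx, rfl⟩
    · intro x hx
      rcases cases' x with h' | ⟨m, rfl⟩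
      · exact absurd (h' ▸ hx) hp
      · exact ⟨⟨m, hKV hx, rfl⟩, hKO' hx⟩
    · rw [Set.disjoint_left]
      rintro x (⟨m, hm, rfl⟩ | hx) ⟨⟨m', hm', h'⟩, hx'⟩
      · rw [inn_inj h'] at hm'
        exact Set.disjoint_left.1 hVd hm hm'
      · exact Set.disjoint_left.1 hOO' hx hx'
  have hpG : IsGδ ({pt U} : Set (OP U)) := by
    obtain ⟨t, ht, hte⟩ := hg
    have h1 : ∀ n, ∃ s ∈ U, IsOpen s ∧ s ⊆ t n := by
      intro n
      obtain ⟨s, hs, hso, hsc⟩ := hreg _ (ht n)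
      exact ⟨s, hs, hso, subset_closure.trans hsc⟩
    choose s hsU hso hst using h1
    have : ({pt U} : Set (OP U)) = ⋂ n, insert (pt U) (inn U '' s n) := by
      ext x
      simp only [mem_singleton_iff, mem_iInter]
      constructor
      · exact fun h n => Or.inl h
      · intro h
        rcases cases' x with h' | ⟨m, rfl⟩
        · exact h'
        · exfalso
          have : m ∈ ⋂ n, t n := by
            refine mem_iInter.2 fun n => hst n ?_
            rcases h n with h1 | ⟨m', h1, h2⟩
            · exact absurd h1 (inn_ne_pt m)
            · rwa [← inn_inj h2]
          rw [hte] at this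
          exact this
    rw [this]
    exact .iInter_of_isOpen fun n => isOpen_insert (hso n) (hsU n)
  refine ⟨⟨⟨fun H K hH hK hd => ?_⟩, fun H hH => ?_⟩, pt U, (homeoCompl U).symm.isEmbedding.metrizableSpace⟩
  · by_cases hp : pt U ∈ K
    · exact (hsep K H hK hH hd.symm (fun h => Set.disjoint_left.1 hd h hp)).symm
    · exact hsep H K hH hK hd hp
  · have hHM : IsGδ (inn U '' (inn U ⁻¹' H)) := by
      let := TopologicalSpace.metrizableSpaceMetric M
      obtain ⟨V, hV, hVe⟩ := isGδ_iff_eq_iInter_nat.1 (hH.preimage (isOpenEmbedding (U := U)).continuous).isGδ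
      rw [hVe, inn_inj.injOn.image_iInter_eq]
      exact .iInter_of_isOpen fun n => isOpen_image (hV n)
    by_cases hp : pt U ∈ H
    · have : H = inn U '' (inn U ⁻¹' H) ∪ {pt U} := by
        ext x
        constructor
        · intro hx
          rcases cases' x with h' | ⟨m, rfl⟩
          · exact Or.inr h'
          · exact Or.inl ⟨m, hx, rfl⟩
        · rintro (⟨m, hm, rfl⟩ | h)
          · exact hm
          · rw [h]; exact hp
      rw [this]
      exact hHM.union hpG
    · have : H = inn U '' (inn U ⁻¹' H) := by
        ext x
        constructor
        · intro hx
          rcases cases' x with h' | ⟨m, rfl⟩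
          · exact absurd (h' ▸ hx) hp
          · exact ⟨m, hx, rfl⟩
        · rintro ⟨m, hm, rfl⟩
          exact hm
      rw [this]
      exact hHM

theorem t1 [TopologicalSpace.MetrizableSpace M]
    (m : M)
    (hcof : ∀ m : M, {m}ᶜ ∈ U) : IsClosed {inn U m} := by
  constructor
  rw [isOpen_iff']
  have : inn U ⁻¹' {inn U m}ᶜ = {m}ᶜ := by
    ext x
    simp [inn_inj.eq_iff]
  rw [this]
  exact ⟨isOpen_compl_singleton, fun _ => hcof m⟩

theorem tpd (hM : ∀ g : unitInterval → M, Continuous g → ∀ s t, g s = g t)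
    (hcl : ∀ m, IsClosed {inn U m}) : TotallyPathDisconnected (OP U) := by
  intro g hg
  let F : ℝ → OP U := Set.IccExtend zero_le_one g
  have hF : Continuous F := hg.Icc_extend'
  have hFg : ∀ s : unitInterval, F s = g s := fun s => Set.IccExtend_val _ _ _
  have hconst : ∀ (x : ℝ) (m : M), F x = inn U m → ∀ y, F y = inn U m := by
    intro x m hx
    have hc : IsClosed (F ⁻¹' {inn U m}) := (hcl m).preimage hF
    have ho : IsOpen (F ⁻¹' {inn U m}) := by
      rw [Metric.isOpen_iff]
      intro t ht
      have hO : IsOpen (F ⁻¹' range (inn U)) := isOpenEmbedding.isOpen_range.preimage hF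
      obtain ⟨ε, hε, hb⟩ := Metric.isOpen_iff.1 hO t ⟨m, ht.symm⟩
      refine ⟨ε, hε, fun s hs => ?_⟩
      have hmem : ∀ u : unitInterval, ∃ m', inn U m' = F (t + u * (s - t)) := by
        intro u
        apply hb
        rw [Metric.mem_ball, Real.dist_eq] at hs ⊢
        have : t + u * (s - t) - t = u * (s - t) := by ring
        rw [this, abs_mul, abs_of_nonneg u.2.1]
        exact (mul_le_of_le_one_left (abs_nonneg _) u.2.2).trans_lt hs
      choose p hp using hmem
      have hpc : Continuous p := by
        rw [(isOpenEmbedding (U := U)).isEmbedding.continuous_iff]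
        have : inn U ∘ p = fun u : unitInterval => F (t + u * (s - t)) := funext hp
        rw [this]
        fun_prop
      have h01 := hM p hpc 0 1
      have h0 := hp 0
      have h1 := hp 1
      simp only [Set.Icc.coe_zero, zero_mul, add_zero, Set.Icc.coe_one, one_mul,
        add_sub_cancel] at h0 h1
      show F s = inn U m
      rw [← h1, ← h01, h0]
      exact ht
    have := IsClopen.eq_univ ⟨hc, ho⟩ ⟨x, hx⟩
    intro y
    have hy : y ∈ F ⁻¹' {inn U m} := by rw [this]; trivial
    exact hy
  intro s t
  rw [← hFg s, ← hFg t]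
  rcases cases' (F s) with h | ⟨m, h⟩
  · rcases cases' (F t) with h' | ⟨m, h'⟩
    · rw [h, h']
    · rw [h', hconst _ m h' s]
  · rw [h, hconst _ m h t]

end OP
/-! the metrizable part -/
def MS (_f : ℝ → ℝ) (A : Type) [LinearOrder A] : Type :=
  {m : AS A × ℝ // (∃ a, ∀ n, m.1.1 n = a) ∨ 0 < m.2}

def SD (f : ℝ → ℝ) : Prop := ∀ a b y : ℝ, a < b → ∃ x, a < x ∧ x < b ∧ f x = y

def GC (f : ℝ → ℝ) : Prop :=
  ∀ J : Set ℝ, J.OrdConnected → IsPreconnected ((fun x => (x, f x)) '' J)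

def cst {A : Type} [LinearOrder A] (a : A) : AS A := ⟨fun _ => a, fun _ _ _ => le_rfl⟩

namespace MS
variable {f : ℝ → ℝ} {A : Type} [LinearOrder A]

def c (m : MS f A) : AS A := m.1.1
def x (m : MS f A) : ℝ := m.1.2
def emb (m : MS f A) : AS A × (ℝ × ℝ) := (m.c, (m.x, f m.x))
def mk (c : AS A) (x : ℝ) (h : (∃ a, ∀ n, c.1 n = a) ∨ 0 < x) : MS f A := ⟨(c, x), h⟩
def pnt (f : ℝ → ℝ) (a : A) (x : ℝ) : MS f A := mk (cst a) x (Or.inl ⟨a, fun _ => rfl⟩)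

theorem prop (m : MS f A) : (∃ a, ∀ n, m.c.1 n = a) ∨ 0 < m.x := m.2

theorem ext {m m' : MS f A} (h1 : m.c = m'.c) (h2 : m.x = m'.x) : m = m' :=
  Subtype.ext (Prod.ext h1 h2)

variable [TopologicalSpace A] [DiscreteTopology A]

instance : TopologicalSpace (MS f A) := .induced emb inferInstance

theorem isEmbedding : IsEmbedding (emb : MS f A → _) :=
  ⟨⟨rfl⟩, fun m m' h => by
    have h1 : (emb m).1 = (emb m').1 := by rw [h]
    have h2 : (emb m).2.1 = (emb m').2.1 := by rw [h]
    exact ext h1 h2⟩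

theorem cont_c : Continuous (c : MS f A → _) := by
  have h : Continuous (fun m : MS f A => (emb m).1) := continuous_fst.comp isEmbedding.continuous
  exact h
theorem cont_x : Continuous (x : MS f A → _) := by
  have h : Continuous (fun m : MS f A => (emb m).2.1) :=
    (continuous_fst.comp continuous_snd).comp isEmbedding.continuous
  exact h
theorem cont_f : Continuous (fun m : MS f A => f m.x) := by
  have h : Continuous (fun m : MS f A => (emb m).2.2) :=
    (continuous_snd.comp continuous_snd).comp isEmbedding.continuous
  exact h
theorem cont_c0 : Continuous (fun m : MS f A => m.c.1 0) :=
  ((continuous_apply 0).comp continuous_subtype_val).comp cont_c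

instance : TopologicalSpace.MetrizableSpace (MS f A) := by
  have := metrizable_AS A
  exact isEmbedding.metrizableSpace

theorem fibre (hG : GC f) (c : AS A) (J : Set ℝ) (hJ : J.OrdConnected)
    (h : (∃ a, ∀ n, c.1 n = a) ∨ ∀ x ∈ J, 0 < x) :
    IsPreconnected {m : MS f A | m.c = c ∧ m.x ∈ J} := by
  rw [← isEmbedding.isInducing.isPreconnected_image]
  have : emb '' {m : MS f A | m.c = c ∧ m.x ∈ J} =
      (fun p => (c, p)) '' ((fun x => (x, f x)) '' J) := by
    ext q
    constructor
    · rintro ⟨m, ⟨rfl, hm⟩, rfl⟩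
      exact ⟨_, ⟨m.x, hm, rfl⟩, rfl⟩
    · rintro ⟨_, ⟨x, hx, rfl⟩, rfl⟩
      exact ⟨mk c x (h.imp id fun h => h x hx), ⟨rfl, hx⟩, rfl⟩
  rw [this]
  exact (hG J hJ).image _ (by fun_prop)

theorem pre_c_eq {S : Set (MS f A)} (hS : IsPreconnected S) {m m' : MS f A} (h : m ∈ S)
    (h' : m' ∈ S) : m.c = m'.c :=
  (hS.image c cont_c.continuousOn).subsingleton ⟨m, h, rfl⟩ ⟨m', h', rfl⟩

theorem pre_ord {S : Set (MS f A)} (hS : IsPreconnected S) : (x '' S).OrdConnected :=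
  (hS.image x cont_x.continuousOn).ordConnected

theorem tpd (hD : SD f) (g : unitInterval → MS f A) (hg : Continuous g) (s t) : g s = g t := by
  have hpre : IsPreconnected (range g) := isPreconnected_range hg
  refine ext (pre_c_eq hpre ⟨s, rfl⟩ ⟨t, rfl⟩) ?_
  obtain ⟨K, hK⟩ := (isCompact_range (cont_f.comp hg)).bddAbove
  have key : ∀ s t, ¬ (g s).x < (g t).x := by
    intro s t hlt
    obtain ⟨z, hz1, hz2, hz3⟩ := hD _ _ (K + 1) hlt
    obtain ⟨_, ⟨u, rfl⟩, hu⟩ := (pre_ord hpre).out ⟨_, ⟨s, rfl⟩, rfl⟩ ⟨_, ⟨t, rfl⟩, rfl⟩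
      ⟨hz1.le, hz2.le⟩
    have := hK ⟨u, rfl⟩
    simp only [Function.comp, hu, hz3] at this
    linarith
  exact le_antisymm (not_lt.1 (key _ _)) (not_lt.1 (key _ _))

theorem nlc (hD : SD f) (m : MS f A) :
    ∃ W : Set (MS f A), IsOpen W ∧ m ∈ W ∧ ∀ V ∈ 𝓝 m, IsPreconnected V → ¬ V ⊆ W := by
  refine ⟨{m' | f m'.x < f m.x + 1}, isOpen_lt cont_f continuous_const, by simp, ?_⟩
  intro V hV hVc hVW
  obtain ⟨O, hO, hOV⟩ := (isEmbedding (f := f) (A := A)).isInducing.nhds_eq_comap m ▸ hV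
  have hcont : ContinuousAt (fun z : ℝ => (m.c, (z, f m.x))) m.x := by fun_prop
  obtain ⟨ε, hε, hb⟩ := Metric.mem_nhds_iff.1 (hcont hO)
  obtain ⟨z, hz1, hz2, hz3⟩ := hD m.x (m.x + ε) (f m.x) (by linarith)
  have hzO := hb (show z ∈ Metric.ball m.x ε by
    rw [Metric.mem_ball, Real.dist_eq, abs_lt]; constructor <;> linarith)
  let m' : MS f A := mk m.c z (m.prop.imp id fun h => h.trans hz1)
  have hm' : m' ∈ V := hOV (show (m.c, (z, f z)) ∈ O by rw [hz3]; exact hzO)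
  obtain ⟨y, hy1, hy2, hy3⟩ := hD m.x z (f m.x + 1) hz1
  obtain ⟨m2, hm2, hm2x⟩ := (pre_ord hVc).out ⟨m, mem_of_mem_nhds hV, rfl⟩ ⟨m', hm', rfl⟩
    ⟨hy1.le, hy2.le⟩
  have := hVW hm2
  rw [mem_ofPred_eq, hm2x, hy3] at this
  exact lt_irrefl _ this

/-- neighbourhoods of the extra point -/
def nb (f : ℝ → ℝ) (B : Set A) (n : ℕ) : Set (MS f A) :=
  {m | (n : ℝ) < f m.x ∧ ((n : ℝ) < m.x ∨ (m.x < -(n : ℝ) ∧ m.c.1 0 ∈ B))}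

theorem nb_mono {B B' : Set A} {n n' : ℕ} (h : B ⊆ B') (hn : n' ≤ n) : nb f B n ⊆ nb f B' n' := by
  have hn : (n' : ℝ) ≤ n := by exact_mod_cast hn
  rintro m ⟨h1, h2⟩
  refine ⟨hn.trans_lt h1, h2.imp (fun h => hn.trans_lt h) fun h' => ⟨?_, h h'.2⟩⟩
  linarith [h'.1]

theorem isOpen_nb (B : Set A) (n : ℕ) : IsOpen (nb f B n) :=
  (isOpen_lt continuous_const cont_f).inter ((isOpen_lt continuous_const cont_x).union
    ((isOpen_lt cont_x continuous_const).inter ((isOpen_discrete B).preimage cont_c0)))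

theorem closure_nb (B : Set A) (n : ℕ) : closure (nb f B (n + 1)) ⊆ nb f B n := by
  have hcl : IsClosed {m : MS f A | ((n + 1 : ℕ) : ℝ) ≤ f m.x ∧ (((n + 1 : ℕ) : ℝ) ≤ m.x ∨
      (m.x ≤ -((n + 1 : ℕ) : ℝ) ∧ m.c.1 0 ∈ B))} :=
    (isClosed_le continuous_const cont_f).inter ((isClosed_le continuous_const cont_x).union
    ((isClosed_le cont_x continuous_const).inter ((isClosed_discrete B).preimage cont_c0)))
  refine (closure_minimal ?_ hcl).trans ?_
  · rintro m ⟨h1, h2⟩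
    exact ⟨h1.le, h2.imp (fun h => h.le) fun h => ⟨h.1.le, h.2⟩⟩
  · rintro m ⟨h1, h2⟩
    push_cast at h1 h2
    refine ⟨by linarith, h2.imp (fun h => by linarith) fun h => ⟨by linarith [h.1], h.2⟩⟩

/-- finite conditions -/
def fc {J : Type} (I : J → Set A) (T : Set J) (s : Finset J) : Set A :=
  {a | ∀ i ∈ s, (a ∈ I i ↔ i ∈ T)}

def flt (f : ℝ → ℝ) {J : Type} (I : J → Set A) (T : Set J) : Filter (MS f A) where
  sets := {W | ∃ s n, nb f (fc I T s) n ⊆ W}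
  univ_sets := ⟨∅, 0, subset_univ _⟩
  sets_of_superset := by
    rintro W W' ⟨s, n, h⟩ hW
    exact ⟨s, n, h.trans hW⟩
  inter_sets := by
    classical
    rintro W W' ⟨s, n, h⟩ ⟨s', n', h'⟩
    refine ⟨s ∪ s', max n n', subset_inter ((nb_mono ?_ (le_max_left _ _)).trans h)
      ((nb_mono ?_ (le_max_right _ _)).trans h')⟩
    · exact fun a ha i hi => ha i (Finset.mem_union_left _ hi)
    · exact fun a ha i hi => ha i (Finset.mem_union_right _ hi)

variable {J : Type} {I : J → Set A} {T : Set J}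

theorem mem_flt {W : Set (MS f A)} : W ∈ flt f I T ↔ ∃ s n, nb f (fc I T s) n ⊆ W := Iff.rfl

theorem nb_mem (s : Finset J) (n : ℕ) : nb f (fc I T s) n ∈ flt f I T := ⟨s, n, Subset.rfl⟩

theorem flt_reg (s : Set (MS f A)) (hs : s ∈ flt f I T) :
    ∃ t ∈ flt f I T, IsOpen t ∧ closure t ⊆ s := by
  obtain ⟨s', n, h⟩ := hs
  exact ⟨_, nb_mem s' (n + 1), isOpen_nb _ _, (closure_nb _ _).trans h⟩

theorem flt_g : ∃ t : ℕ → Set (MS f A), (∀ n, t n ∈ flt f I T) ∧ ⋂ n, t n = ∅ := by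
  refine ⟨fun n => nb f (fc I T ∅) n, fun n => nb_mem _ _, ?_⟩
  rw [eq_empty_iff_forall_notMem]
  intro m hm
  obtain ⟨n, hn⟩ := exists_nat_ge (f m.x)
  exact absurd (mem_iInter.1 hm n).1 (not_lt.2 hn)

theorem flt_cof (m : MS f A) : {m}ᶜ ∈ flt f I T := by
  obtain ⟨n, hn⟩ := exists_nat_ge (f m.x)
  refine ⟨∅, n, fun m' hm' h => ?_⟩
  rw [mem_singleton_iff.1 h] at hm'
  exact absurd hm'.1 (not_lt.2 hn)

theorem am : AlmostMetrizable (OP (flt f I T)) := OP.almostMetrizable flt_reg flt_g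

theorem op_tpd (hD : SD f) : TotallyPathDisconnected (OP (flt f I T)) :=
  OP.tpd (tpd hD) fun m => OP.t1 m flt_cof

theorem exists_big (hD : SD f) (n : ℕ) (y : ℝ) : ∃ x, y < x ∧ (n : ℝ) < x ∧ (n : ℝ) < f x := by
  obtain ⟨x, h1, h2, h3⟩ := hD (max y n) (max y n + 1) (n + 1) (by linarith)
  exact ⟨x, (le_max_left _ _).trans_lt h1, (le_max_right _ _).trans_lt h1, by linarith⟩

theorem exists_small (hD : SD f) (n : ℕ) (y : ℝ) :
    ∃ x, x < y ∧ x < -(n : ℝ) ∧ (n : ℝ) < f x := by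
  obtain ⟨x, h1, h2, h3⟩ := hD (min y (-n) - 1) (min y (-n)) (n + 1) (by linarith)
  exact ⟨x, h2.trans_le (min_le_left _ _), h2.trans_le (min_le_right _ _), by linarith⟩

theorem op_nlc [Nonempty A] (hD : SD f) : NowhereLocallyConnected (OP (flt f I T)) := by
  intro y
  rcases OP.cases' y with rfl | ⟨m, rfl⟩
  · refine ⟨_, (OP.isOpen_insert (isOpen_nb _ _) (nb_mem ∅ 0)).mem_nhds (Or.inl rfl), ?_⟩
    intro V hV hVc hVU
    obtain ⟨s, n, hsn⟩ := OP.mem_of_nhds hV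
    obtain ⟨x1, -, hx1, hfx1⟩ := exists_big hD n 0
    obtain ⟨x0, hx0, -, hfx0⟩ := hD x1 (x1 + 1) (-1) (by linarith)
    have hn0 : (0 : ℝ) ≤ n := by positivity
    have hW1 : IsOpen {m : MS f A | 0 < m.x ∧ m.x < x0} :=
      (isOpen_lt continuous_const cont_x).inter (isOpen_lt cont_x continuous_const)
    have hW2 : IsOpen {m : MS f A | m.x < 0 ∨ x0 < m.x} :=
      (isOpen_lt cont_x continuous_const).union (isOpen_lt continuous_const cont_x)
    have hW2' : {m : MS f A | m.x < 0 ∨ x0 < m.x} ∈ flt f I T := by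
      obtain ⟨k, hk⟩ := exists_nat_ge x0
      refine ⟨∅, k, ?_⟩
      rintro m ⟨-, h | ⟨h, -⟩⟩
      · right; linarith
      · left
        have : (0 : ℝ) ≤ k := by positivity
        linarith
    obtain ⟨z, hz, hz1, hz2⟩ := hVc.isPreconnected _ _ (OP.isOpen_image (U := flt f I T) hW1)
      (OP.isOpen_insert hW2 hW2') (by
        intro z hz
        rcases hVU hz with rfl | ⟨m, hm, rfl⟩
        · exact Or.inr (Or.inl rfl)
        · have hmx : m.x ≠ x0 := by
            intro h
            have := hm.1
            rw [h, hfx0] at this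
            norm_num at this
          rcases hm.2 with h | ⟨h, -⟩
          · rcases lt_or_gt_of_ne hmx with h' | h'
            · exact Or.inl ⟨m, ⟨by simpa using h, h'⟩, rfl⟩
            · exact Or.inr (Or.inr ⟨m, Or.inr h', rfl⟩)
          · exact Or.inr (Or.inr ⟨m, Or.inl (by simpa using h), rfl⟩)) (by
        refine ⟨OP.inn _ (pnt f (Classical.arbitrary A) x1), hsn ⟨hfx1, Or.inl hx1⟩,
          pnt f (Classical.arbitrary A) x1, ⟨show 0 < x1 by linarith, show x1 < x0 from hx0⟩, rfl⟩) ⟨OP.pt _, mem_of_mem_nhds hV, Or.inl rfl⟩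
    obtain ⟨m, hm, rfl⟩ := hz1
    rcases hz2 with h | ⟨m', hm', h⟩
    · exact OP.inn_ne_pt _ h
    · rw [OP.inn_inj h] at hm'
      rcases hm' with h' | h'
      · exact lt_asymm h' hm.1
      · exact lt_asymm h' hm.2
  · obtain ⟨W, hW, hmW, hWV⟩ := nlc hD m
    refine ⟨_, (OP.isOpen_image hW).mem_nhds ⟨m, hmW, rfl⟩, ?_⟩
    intro V hV hVc hVW
    have hVe : V = OP.inn _ '' (OP.inn _ ⁻¹' V) :=
      (image_preimage_eq_iff.2 (hVW.trans (image_subset_range _ _))).symm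
    refine hWV (OP.inn _ ⁻¹' V) (OP.isOpenEmbedding.continuous.continuousAt hV) ?_ ?_
    · rw [← OP.isOpenEmbedding.isInducing.isPreconnected_image, ← hVe]
      exact hVc.isPreconnected
    · intro m' hm'
      obtain ⟨m2, hm2, h⟩ := hVW hm'
      rwa [← OP.inn_inj h]

theorem op_conn (hD : SD f) (hG : GC f) : ConnectedSpace (OP (flt f I T)) := by
  have : IsPreconnected (Set.univ : Set (OP (flt f I T))) := by
    apply isPreconnected_of_forall (OP.pt (flt f I T))
    intro y _
    rcases OP.cases' y with rfl | ⟨m, rfl⟩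
    · exact ⟨{OP.pt _}, subset_univ _, rfl, rfl, isPreconnected_singleton⟩
    · -- fibre
      have hJ : IsPreconnected {m' : MS f A | m'.c = m.c ∧ m'.x ∈ Ici (min m.x 1)} := by
        apply fibre hG _ _ ordConnected_Ici
        refine m.prop.imp id fun h x hx => ?_
        have := lt_min h one_pos
        exact this.trans_le hx
      have h1 := hJ.image (OP.inn (flt f I T)) OP.isOpenEmbedding.continuous.continuousOn
      refine ⟨insert (OP.pt _) (OP.inn (flt f I T) '' {m' : MS f A | m'.c = m.c ∧ m'.x ∈ Ici (min m.x 1)}), subset_univ _, Or.inl rfl,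
        Or.inr ⟨m, ⟨rfl, mem_Ici.2 (min_le_left _ _)⟩, rfl⟩,
        h1.subset_closure (subset_insert _ _) (insert_subset ?_ subset_closure)⟩
      rw [mem_closure_iff_nhds]
      intro V hV
      obtain ⟨s, n, hsn⟩ := OP.mem_of_nhds hV
      obtain ⟨x, hx1, hx2, hx3⟩ := exists_big hD n (max m.x 1)
      have hx0 : 1 < x := (le_max_right _ _).trans_lt hx1
      let m' : MS f A := mk m.c x (Or.inr (by linarith))
      refine ⟨OP.inn _ m', hsn (show m' ∈ _ from ⟨hx3, Or.inl hx2⟩), m', ⟨rfl, ?_⟩, rfl⟩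
      exact (min_le_right _ _).trans hx0.le
  exact { isPreconnected_univ := this, toNonempty := ⟨OP.pt _⟩ }

theorem op_card [WellFoundedLT A] [Infinite A] (hA : 𝔠 ≤ #A) : #(OP (flt f I T)) = #A := by
  apply le_antisymm
  · have h1 : #(MS f A) ≤ #A := by
      calc #(MS f A) ≤ #(AS A × ℝ) := mk_subtype_le _
        _ = #(AS A) * 𝔠 := by rw [mk_prod, lift_id, lift_id, mk_real]
        _ ≤ #A * #A := mul_le_mul' (mk_AS A) hA
        _ = #A := mul_eq_self (aleph0_le_mk A)
    have h2 : #(OP (flt f I T)) = #(MS f A) + 1 := mk_option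
    rw [h2]
    exact add_le_of_le (aleph0_le_mk A) h1 (one_le_aleph0.trans (aleph0_le_mk A))
  · refine mk_le_of_injective (f := fun a => OP.inn _ (pnt f a 0)) ?_
    intro a b h
    have h1 := congrArg (fun m : MS f A => m.c.1 0) (OP.inn_inj h)
    exact h1

end MS
namespace MS
variable {f : ℝ → ℝ} {A : Type} [LinearOrder A] [TopologicalSpace A] [DiscreteTopology A]
variable {J : Type} {I : J → Set A} {T T' : Set J}

def Ind (I : J → Set A) : Prop :=
  ∀ (s : Finset J) (T : Set J), ∃ a, ∀ i ∈ s, (a ∈ I i ↔ i ∈ T)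

theorem char_le (hI : Ind I) (hD : SD f) {β : Type} (b : β → Set (MS f A))
    (hb : ∀ i, b i ∈ flt f I T) (hc : ∀ W ∈ flt f I T, ∃ i, b i ⊆ W) : #J ≤ #β * ℵ₀ := by
  classical
  have hb' : ∀ i, ∃ s n, nb f (fc I T s) n ⊆ b i := hb
  choose s n hs using hb'
  have hU : (⋃ i, (s i : Set J)) = Set.univ := by
    rw [eq_univ_iff_forall]
    intro j
    obtain ⟨i, hi⟩ := hc _ (nb_mem {j} 0)
    refine mem_iUnion.2 ⟨i, ?_⟩
    by_contra hj
    have hj : j ∉ s i := hj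
    obtain ⟨a, ha⟩ := hI (insert j (s i)) {k | if k = j then j ∉ T else k ∈ T}
    have ha1 : a ∈ fc I T (s i) := by
      intro k hk
      have hkj : k ≠ j := fun h => hj (h ▸ hk)
      have := ha k (Finset.mem_insert_of_mem hk)
      simpa [hkj] using this
    have ha2 : a ∉ fc I T {j} := by
      intro h
      have h1 := h j (Finset.mem_singleton_self j)
      have h2 := ha j (Finset.mem_insert_self _ _)
      simp only [mem_ofPred_eq, if_true] at h2
      tauto
    obtain ⟨x, hx0, hx1, hx2⟩ := exists_small hD (n i) 0
    have h1 : pnt f a x ∈ nb f (fc I T (s i)) (n i) := ⟨hx2, Or.inr ⟨hx1, ha1⟩⟩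
    obtain ⟨-, h | ⟨-, h⟩⟩ := hi (hs i h1)
    · have h : ((0 : ℕ) : ℝ) < x := h
      push_cast at h
      linarith
    · exact ha2 h
  calc #J = #(⋃ i, (s i : Set J)) := by rw [hU, mk_univ]
    _ ≤ Cardinal.sum fun i => #(s i : Set J) := mk_iUnion_le_sum_mk
    _ ≤ Cardinal.sum fun _ : β => ℵ₀ := sum_le_sum _ _ fun i => by
        exact (Finset.countable_toSet (s i)).le_aleph0
    _ = #β * ℵ₀ := by simp

theorem tw [WellFoundedLT A] [Infinite A] (hA : 𝔠 ≤ #A) (hJ : #A ≤ #J) (hI : Ind I)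
    (hD : SD f) : tweight (OP (flt f I T)) = #J := by
  have hJ0 : ℵ₀ < #J := aleph0_lt_continuum.trans_le (hA.trans hJ)
  have : Infinite J := infinite_iff.2 hJ0.le
  apply le_antisymm
  · have h1 : ∀ m : MS f A, ∃ V : ℕ → Set (MS f A), (∀ n, IsOpen (V n) ∧ m ∈ V n) ∧
        ∀ W ∈ 𝓝 m, ∃ n, V n ⊆ W := by
      intro m
      obtain ⟨V, hV⟩ := (𝓝 m).exists_antitone_basis
      refine ⟨fun n => interior (V n), fun n => ⟨isOpen_interior,
        mem_interior_iff_mem_nhds.2 (hV.mem n)⟩, fun W hW => ?_⟩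
      obtain ⟨n, hn⟩ := hV.mem_iff.1 hW
      exact ⟨n, interior_subset.trans hn⟩
    choose V hV1 hV2 using h1
    let g : (MS f A × ℕ) ⊕ (Finset J × ℕ) → Set (OP (flt f I T)) := Sum.elim
      (fun p => OP.inn _ '' V p.1 p.2)
      (fun p => insert (OP.pt _) (OP.inn _ '' nb f (fc I T p.1) p.2))
    have hb : TopologicalSpace.IsTopologicalBasis (range g) := by
      apply TopologicalSpace.isTopologicalBasis_of_isOpen_of_nhds
      · rintro _ ⟨p | p, rfl⟩
        · exact OP.isOpen_image (hV1 _ _).1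
        · exact OP.isOpen_insert (isOpen_nb _ _) (nb_mem _ _)
      · intro y W hy hW
        rcases OP.cases' y with rfl | ⟨m, rfl⟩
        · obtain ⟨s, n, hsn⟩ := hW.2 hy
          refine ⟨_, ⟨Sum.inr (s, n), rfl⟩, Or.inl rfl, ?_⟩
          exact insert_subset hy (image_subset_iff.2 hsn)
        · obtain ⟨n, hn⟩ := hV2 m _ (hW.1.mem_nhds hy)
          exact ⟨_, ⟨Sum.inl (m, n), rfl⟩, ⟨m, (hV1 m n).2, rfl⟩, image_subset_iff.2 hn⟩
    have hM : #(MS f A) ≤ #J := by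
      refine le_trans ?_ hJ
      rw [← op_card (f := f) (I := I) (T := T) hA]
      exact mk_le_of_injective (OP.inn_inj (U := flt f I T))
    have hw : tweight (OP (flt f I T)) ≤ #(range g) := csInf_le' ⟨_, hb, rfl⟩
    refine hw.trans (mk_range_le.trans ?_)
    rw [mk_sum, mk_prod, mk_prod, mk_finset_of_infinite]
    simp only [lift_id, mk_nat]
    exact add_le_of_le hJ0.le (mul_le_of_le hJ0.le hM hJ0.le) (mul_le_of_le hJ0.le le_rfl hJ0.le)
  · refine le_csInf ⟨_, _, TopologicalSpace.isTopologicalBasis_opens, rfl⟩ ?_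
    rintro _ ⟨B, hB, rfl⟩
    have h := char_le (T := T) hI hD
      (fun b : {b : Set (OP (flt f I T)) // b ∈ B ∧ OP.pt _ ∈ b} => OP.inn _ ⁻¹' b.1)
      (fun b => (hB.isOpen b.2.1).2 b.2.2) (by
        rintro W ⟨s, n, hsn⟩
        obtain ⟨b, hb, hp, hbW⟩ := hB.exists_subset_of_mem_open (Or.inl rfl)
          (OP.isOpen_insert (isOpen_nb _ _) (nb_mem (f := f) (I := I) (T := T) s n))
        refine ⟨⟨b, hb, hp⟩, fun m hm => ?_⟩
        rcases hbW hm with h | ⟨m', h, h'⟩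
        · exact absurd h (OP.inn_ne_pt m)
        · rw [← OP.inn_inj h']; exact hsn h)
    have h2 : #{b : Set (OP (flt f I T)) // b ∈ B ∧ OP.pt _ ∈ b} ≤ #B :=
      mk_le_mk_of_subset (fun b hb => hb.1)
    by_contra hlt
    rw [not_le] at hlt
    exact absurd h (not_le.2 (mul_lt_of_lt hJ0.le (h2.trans_lt hlt) hJ0))

/-- the extra point is preserved -/
theorem pt_pt (hJ : ℵ₀ < #J) (hI : Ind I) (hD : SD f)
    (h : OP (flt f I T) ≃ₜ OP (flt f I T')) : h (OP.pt _) = OP.pt _ := by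
  rcases OP.cases' (h (OP.pt _)) with h1 | ⟨m, hm⟩
  · exact h1
  exfalso
  have : (𝓝 (OP.inn (flt f I T') m)).IsCountablyGenerated := by
    rw [← OP.isOpenEmbedding.map_nhds_eq]
    infer_instance
  have : (𝓝 (OP.pt (flt f I T))).IsCountablyGenerated := by
    rw [h.isInducing.nhds_eq_comap, hm]
    infer_instance
  obtain ⟨V, hV⟩ := (𝓝 (OP.pt (flt f I T))).exists_antitone_basis
  have hle := char_le (T := T) hI hD (fun n => OP.inn _ ⁻¹' V n)
    (fun n => OP.mem_of_nhds (hV.mem n)) (by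
      rintro W ⟨s, n, hsn⟩
      obtain ⟨k, hk⟩ := hV.mem_iff.1 ((OP.isOpen_insert (isOpen_nb _ _)
        (nb_mem (f := f) (I := I) (T := T) s n)).mem_nhds (Or.inl rfl))
      refine ⟨k, fun m hm => ?_⟩
      rcases hk hm with h | ⟨m', h, h'⟩
      · exact absurd h (OP.inn_ne_pt m)
      · rw [← OP.inn_inj h']; exact hsn h)
  rw [mk_nat, aleph0_mul_aleph0] at hle
  exact absurd hle (not_le.2 hJ)

theorem exists_ht (hJ : ℵ₀ < #J) (hI : Ind I) (hD : SD f)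
    (h : OP (flt f I T) ≃ₜ OP (flt f I T')) :
    ∃ g : MS f A ≃ₜ MS f A, ∀ W ∈ flt f I T, g.symm ⁻¹' W ∈ flt f I T' := by
  have hp := pt_pt hJ hI hD h
  have hp' := pt_pt hJ hI hD h.symm
  have e1 : ∀ m : MS f A, ∃ m', OP.inn _ m' = h (OP.inn _ m) := by
    intro m
    rcases OP.cases' (h (OP.inn _ m)) with h1 | ⟨m', h1⟩
    · rw [← hp] at h1
      exact absurd (h.injective h1) (OP.inn_ne_pt m)
    · exact ⟨m', h1.symm⟩
  have e2 : ∀ m : MS f A, ∃ m', OP.inn _ m' = h.symm (OP.inn _ m) := by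
    intro m
    rcases OP.cases' (h.symm (OP.inn _ m)) with h1 | ⟨m', h1⟩
    · rw [← hp'] at h1
      exact absurd (h.symm.injective h1) (OP.inn_ne_pt m)
    · exact ⟨m', h1.symm⟩
  choose g hg using e1
  choose g' hg' using e2
  let G : MS f A ≃ₜ MS f A :=
    { toFun := g
      invFun := g'
      left_inv := fun m => OP.inn_inj (U := flt f I T) (by rw [hg', hg, h.symm_apply_apply])
      right_inv := fun m => OP.inn_inj (U := flt f I T') (by rw [hg, hg', h.apply_symm_apply])
      continuous_toFun := by
        rw [(OP.isOpenEmbedding (U := flt f I T')).isEmbedding.continuous_iff]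
        have : OP.inn (flt f I T') ∘ g = h ∘ OP.inn (flt f I T) := funext hg
        rw [this]
        exact h.continuous.comp OP.isOpenEmbedding.continuous
      continuous_invFun := by
        rw [(OP.isOpenEmbedding (U := flt f I T)).isEmbedding.continuous_iff]
        have : OP.inn (flt f I T) ∘ g' = h.symm ∘ OP.inn (flt f I T') := funext hg'
        rw [this]
        exact h.symm.continuous.comp OP.isOpenEmbedding.continuous }
  refine ⟨G, ?_⟩
  rintro W ⟨s, n, hsn⟩
  have hO := OP.isOpen_insert (isOpen_nb _ _) (nb_mem (f := f) (I := I) (T := T) s n)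
  have hO' := hO.preimage h.symm.continuous
  refine Filter.mem_of_superset (hO'.2 (Or.inl hp')) ?_
  intro m hm
  have hm : h.symm (OP.inn _ m) ∈ insert (OP.pt (flt f I T)) (OP.inn (flt f I T) '' nb f (fc I T s) n) := hm
  rw [← hg'] at hm
  rcases hm with h1 | ⟨m', h1, h'⟩
  · exact absurd h1 (OP.inn_ne_pt _)
  · exact hsn (show g' m ∈ _ by rw [← OP.inn_inj h']; exact h1)

theorem cont_mk1 : Continuous (fun c : AS A => (mk c 1 (Or.inr one_pos) : MS f A)) := by
  rw [isEmbedding.continuous_iff]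
  have : emb ∘ (fun c : AS A => (mk c 1 (Or.inr one_pos) : MS f A)) =
    fun c => (c, ((1 : ℝ), f 1)) := rfl
  rw [this]
  fun_prop

theorem ht_c (hG : GC f) (g : MS f A ≃ₜ MS f A) (m m' : MS f A) (hm : m.c = m'.c) :
    (g m).c = (g m').c := by
  have key : ∀ m : MS f A, (g m).c = (g (mk m.c 1 (Or.inr one_pos))).c := by
    intro m
    have hp : IsPreconnected {m' : MS f A | m'.c = m.c ∧ m'.x ∈ Ici (min m.x 1)} := by
      apply fibre hG _ _ ordConnected_Ici
      refine m.prop.imp id fun h x hx => ?_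
      have := lt_min h one_pos
      exact this.trans_le hx
    exact pre_c_eq (hp.image g g.continuous.continuousOn)
      ⟨m, ⟨rfl, mem_Ici.2 (min_le_left _ _)⟩, rfl⟩ ⟨mk m.c 1 (Or.inr one_pos), ⟨rfl, mem_Ici.2 (min_le_right _ _)⟩, rfl⟩
  rw [key m, key m', hm]

theorem exists_phi (hG : GC f) (g : MS f A ≃ₜ MS f A) :
    ∃ φ : AS A ≃ₜ AS A, ∀ m, (g m).c = φ m.c := by
  refine ⟨{
    toFun := fun c => (g (mk c 1 (Or.inr one_pos))).c
    invFun := fun c => (g.symm (mk c 1 (Or.inr one_pos))).c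
    left_inv := fun c => ?_
    right_inv := fun c => ?_
    continuous_toFun := cont_c.comp (g.continuous.comp cont_mk1)
    continuous_invFun := cont_c.comp (g.symm.continuous.comp cont_mk1) }, ?_⟩
  · have := ht_c hG g.symm (mk (g (mk c 1 (Or.inr one_pos))).c 1 (Or.inr one_pos))
      (g (mk c 1 (Or.inr one_pos))) rfl
    rw [g.symm_apply_apply] at this
    exact this
  · have := ht_c hG g (mk (g.symm (mk c 1 (Or.inr one_pos))).c 1 (Or.inr one_pos))
      (g.symm (mk c 1 (Or.inr one_pos))) rfl
    rw [g.apply_symm_apply] at this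
    exact this
  · intro m
    exact ht_c hG g _ _ rfl

theorem recov [WellFoundedLT A] (hD : SD f) (hG : GC f) (g : MS f A ≃ₜ MS f A) (B : Set A)
    (s : Finset J) (n : ℕ) (hs : nb f (fc I T s) n ⊆ g.symm ⁻¹' nb f B 1) :
    fc I T s ⊆ B := by
  intro α hα
  by_contra hB
  obtain ⟨φ, hφ⟩ := exists_phi hG g
  have hc0 : LimV (φ (φ.symm (cst α))) α := by
    rw [φ.apply_symm_apply]
    exact ⟨0, fun _ _ => rfl⟩
  have hc := LimV.homeo φ α _ hc0
  have hφc := φ.apply_symm_apply (cst α)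
  generalize φ.symm (cst α) = c at hc hφc
  obtain ⟨q, q2, hq, hq2, hlt, hno⟩ : ∃ q q2 : MS f A, q.c = c ∧ q2.c = c ∧ q2.x < q.x ∧
      ∀ m : MS f A, m.c = c → m.x < q.x → m ∉ nb f B 1 := by
    by_cases h : ∃ a, ∀ n, c.1 n = a
    · refine ⟨mk c 0 (Or.inl h), mk c (-1) (Or.inl h), rfl, rfl, ?_, ?_⟩
      · show (-1 : ℝ) < 0
        norm_num
      · rintro m hm hx ⟨-, h2⟩
        have hx : m.x < 0 := hx
        push_cast at h2
        rcases h2 with h2 | ⟨-, h2⟩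
        · linarith
        · obtain ⟨a, ha⟩ := h
          obtain ⟨N, hN⟩ := hc
          rw [hm, ha 0, ← ha N, hN N le_rfl] at h2
          exact hB h2
    · refine ⟨mk c 1 (Or.inr one_pos), mk c (1 / 2) (Or.inr (by norm_num)), rfl, rfl, ?_, ?_⟩
      · show (1 / 2 : ℝ) < 1
        norm_num
      · rintro m hm hx ⟨-, h2⟩
        have hx : m.x < 1 := hx
        push_cast at h2
        have hp : 0 < m.x := m.prop.resolve_left (by rw [hm]; exact h)
        rcases h2 with h2 | ⟨h2, -⟩ <;> linarith
  have hgq : (g q).c = cst α := by rw [hφ, hq, hφc]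
  have hgq2 : (g q2).c = cst α := by rw [hφ, hq2, hφc]
  have hne : (g q2).x ≠ (g q).x := by
    intro h
    have := g.injective (ext (hgq2.trans hgq.symm) h)
    rw [this] at hlt
    exact lt_irrefl _ hlt
  have side : ∀ K : Set ℝ, K.OrdConnected → (g q2).x ∈ K → (g q).x ∉ K →
      ∀ x ∈ K, (n : ℝ) < f x → ((n : ℝ) < x ∨ x < -(n : ℝ)) → False := by
    intro K hK h2 h1 x hx hfx hxn
    have hP : IsPreconnected {m : MS f A | m.c = cst α ∧ m.x ∈ K} :=
      fibre hG _ _ hK (Or.inl ⟨α, fun _ => rfl⟩)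
    have hP' := hP.image g.symm g.symm.continuous.continuousOn
    have hcc : ∀ m ∈ g.symm '' {m : MS f A | m.c = cst α ∧ m.x ∈ K}, m.c = c := fun m hm =>
      (pre_c_eq hP' hm ⟨g q2, ⟨hgq2, h2⟩, g.symm_apply_apply _⟩).trans hq2
    have hz : pnt f α x ∈ nb f (fc I T s) n := ⟨hfx, hxn.imp id fun h => ⟨h, hα⟩⟩
    have hzm : g.symm (pnt f α x) ∈ g.symm '' {m : MS f A | m.c = cst α ∧ m.x ∈ K} :=
      ⟨pnt f α x, ⟨rfl, hx⟩, rfl⟩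
    refine hno _ (hcc _ hzm) ?_ (hs hz)
    by_contra hge
    obtain ⟨m, hm, hmx⟩ := (pre_ord hP').out ⟨q2, ⟨g q2, ⟨hgq2, h2⟩, g.symm_apply_apply _⟩, rfl⟩
      ⟨_, hzm, rfl⟩ ⟨hlt.le, not_lt.1 hge⟩
    have hmq : m = q := ext ((hcc m hm).trans hq.symm) hmx
    obtain ⟨m', hm', h'⟩ := hm
    rw [hmq] at h'
    apply h1
    rw [← h', g.apply_symm_apply]
    exact hm'.2
  rcases lt_or_gt_of_ne hne with h | h
  · obtain ⟨x, hx0, hx1, hx2⟩ := exists_small hD n (g q).x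
    exact side (Iio (g q).x) ordConnected_Iio h (fun h => lt_irrefl _ (show (g q).x < (g q).x from h)) x hx0 hx2 (Or.inr hx1)
  · obtain ⟨x, hx0, hx1, hx2⟩ := exists_big hD n (g q).x
    exact side (Ioi (g q).x) ordConnected_Ioi h (fun h => lt_irrefl _ (show (g q).x < (g q).x from h)) x hx0 hx2 (Or.inl hx1)

theorem eq_of_homeo [WellFoundedLT A] (hJ : ℵ₀ < #J) (hI : Ind I) (hD : SD f) (hG : GC f)
    (h : OP (flt f I T) ≃ₜ OP (flt f I T')) : T = T' := by
  classical
  obtain ⟨g, hg⟩ := exists_ht hJ hI hD h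
  ext j
  obtain ⟨s, n, hs⟩ := hg _ (nb_mem {j} 1)
  have h1 := recov hD hG g _ s n hs
  obtain ⟨a, ha⟩ := hI (insert j s) T'
  have h2 := h1 (fun i hi => ha i (Finset.mem_insert_of_mem hi)) j (Finset.mem_singleton_self j)
  exact h2.symm.trans (ha j (Finset.mem_insert_self _ _))

end MS

theorem stmt14 (κ lam : Cardinal) (h0 : Cardinal.continuum ≤ κ)
    (h1 : κ ≤ lam) (h2 : lam ≤ 2 ^ κ) :
    ExistsNonHomeoFamily (2 ^ lam) (fun X t =>
      letI := t
      ConnectedSpace X ∧ TotallyPathDisconnected X ∧ NowhereLocallyConnected X ∧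
        AlmostMetrizable X ∧ #X = κ ∧ tweight X = lam) := by
  obtain ⟨A, rfl⟩ : ∃ A : Type, #A = κ := ⟨κ.out, mk_out κ⟩
  obtain ⟨J, rfl⟩ : ∃ J : Type, #J = lam := ⟨lam.out, mk_out lam⟩
  obtain ⟨_, hwf⟩ := exists_wellFoundedLT A
  let tA : TopologicalSpace A := ⊥
  have : DiscreteTopology A := ⟨rfl⟩
  have : Infinite A := infinite_iff.2 (aleph0_le_continuum.trans h0)
  have hJ : ℵ₀ < #J := aleph0_lt_continuum.trans_le (h0.trans h1)
  obtain ⟨f, hD, hG⟩ := exists_f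
  obtain ⟨I, hI⟩ := exists_indep A J h2
  refine ⟨Set J, fun T => OP (MS.flt f I T), fun T => inferInstance, mk_set, ?_, ?_⟩
  · intro T
    exact ⟨MS.op_conn hD hG, MS.op_tpd hD, MS.op_nlc hD, MS.am, MS.op_card h0,
      MS.tw h0 h1 hI hD⟩
  · intro T T' hne
    exact ⟨fun h => hne (MS.eq_of_homeo hJ hI hD hG h)⟩
end

section
/- For every infinite cardinal λ with λ ≤ 𝔠, where 𝔠 = 2^{ℵ₀}, there exist 2^λ mutually non-homeomorphic connected, locally connected Hausdorff spaces of cardinality ℵ₀ and weight λ. -/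
open Cardinal Set Topology

structure Dat (D Q J : Type) where
  p : D → Q
  O : Q → Set Q
  f : D → J → Fin 3
  hrefl : ∀ q, q ∈ O q
  htrans : ∀ q r, r ∈ O q → O r ⊆ O q
  rich : ∀ (q : Q) (F : Finset J) (g : J → Fin 3), ∃ d, p d = q ∧ ∀ i ∈ F, f d i = g i
  sep : ∀ x y, x ≠ y → ∃ i, f x i ≠ 0 ∧ f y i ≠ 0 ∧ f x i ≠ f y i

namespace Dat

variable {D Q J : Type} (S : Dat D Q J)

def Sp (_ : Dat D Q J) : Type := D

def N (d : D) (F : Finset J) : Set D :=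
  {y | S.p y ∈ S.O (S.p d) ∧ ∀ i ∈ F, S.f d i ≠ 0 → S.f y i = S.f d i}

theorem mem_N (d : D) (F : Finset J) : d ∈ S.N d F := ⟨S.hrefl _, fun _ _ _ => rfl⟩

theorem N_mono (d : D) {F G : Finset J} (h : F ⊆ G) : S.N d G ⊆ S.N d F :=
  fun _ hy => ⟨hy.1, fun i hi => hy.2 i (h hi)⟩

theorem N_sub {d y : D} {F : Finset J} (h : y ∈ S.N d F) : S.N y F ⊆ S.N d F := by
  intro z hz
  refine ⟨S.htrans _ _ h.1 hz.1, fun i hi hd => ?_⟩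
  have h1 := h.2 i hi hd
  rw [← h1]
  exact hz.2 i hi (by rw [h1]; exact hd)

instance : TopologicalSpace S.Sp where
  IsOpen U := ∀ d ∈ U, ∃ F, S.N d F ⊆ U
  isOpen_univ := fun d _ => ⟨∅, subset_univ _⟩
  isOpen_inter := by
    classical
    intro U V hU hV d hd
    obtain ⟨F, hF⟩ := hU d hd.1
    obtain ⟨G, hG⟩ := hV d hd.2
    exact ⟨F ∪ G, fun y hy => ⟨hF (S.N_mono d Finset.subset_union_left hy),
      hG (S.N_mono d Finset.subset_union_right hy)⟩⟩
  isOpen_sUnion := by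
    intro s hs d hd
    obtain ⟨U, hU, hdU⟩ := hd
    obtain ⟨F, hF⟩ := hs U hU d hdU
    exact ⟨F, fun y hy => ⟨U, hU, hF hy⟩⟩

theorem isOpen_iff' (U : Set S.Sp) : IsOpen U ↔ ∀ d ∈ U, ∃ F, S.N d F ⊆ U := Iff.rfl

def B (d : S.Sp) (F : Finset J) : Set S.Sp := S.N d F

theorem isOpen_B (d : S.Sp) (F : Finset J) : IsOpen (S.B d F) :=
  fun _ hy => ⟨F, S.N_sub hy⟩

theorem mem_B (d : S.Sp) (F : Finset J) : d ∈ S.B d F := S.mem_N d F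

theorem exists_B {U : Set S.Sp} (hU : IsOpen U) {d : S.Sp} (hd : d ∈ U) :
    ∃ F, S.B d F ⊆ U := hU d hd

theorem isBasis : TopologicalSpace.IsTopologicalBasis
    (range fun x : S.Sp × Finset J => S.B x.1 x.2) := by
  refine TopologicalSpace.isTopologicalBasis_of_isOpen_of_nhds ?_ ?_
  · rintro _ ⟨x, rfl⟩
    exact S.isOpen_B _ _
  · intro a U ha hU
    obtain ⟨F, hF⟩ := S.exists_B hU ha
    exact ⟨_, ⟨(a, F), rfl⟩, S.mem_B _ _, hF⟩

instance : T2Space S.Sp := by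
  refine ⟨fun x y hxy => ?_⟩
  obtain ⟨i, hx, hy, hne⟩ := S.sep x y hxy
  refine ⟨S.B x {i}, S.B y {i}, S.isOpen_B _ _, S.isOpen_B _ _, S.mem_B _ _, S.mem_B _ _, ?_⟩
  rw [Set.disjoint_left]
  intro z hz hz'
  exact hne ((hz.2 i (by simp) hx).symm.trans (hz'.2 i (by simp) hy))

/-- meeting criterion -/
theorem meet (x y : D) (F G : Finset J) (q : Q) (hx : q ∈ S.O (S.p x)) (hy : q ∈ S.O (S.p y))
    (h : ∀ i ∈ F, i ∈ G → S.f x i ≠ 0 → S.f y i ≠ 0 → S.f x i = S.f y i) :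
    ∃ w, w ∈ S.N x F ∧ w ∈ S.N y G := by
  classical
  obtain ⟨w, hw, hw'⟩ := S.rich q (F ∪ G)
    (fun i => if i ∈ F ∧ S.f x i ≠ 0 then S.f x i else S.f y i)
  refine ⟨w, ⟨hw ▸ hx, fun i hi h0 => ?_⟩, ⟨hw ▸ hy, fun i hi h0 => ?_⟩⟩
  · rw [hw' i (Finset.mem_union_left _ hi), if_pos ⟨hi, h0⟩]
  · rw [hw' i (Finset.mem_union_right _ hi)]
    split_ifs with hc
    · exact h i hc.1 hi hc.2 h0
    · rfl

theorem precon (d : S.Sp) (F : Finset J) : IsPreconnected (S.B d F) := by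
  classical
  have key : ∀ U V : Set S.Sp,
      ∀ x ∈ S.B d F, ∀ Fz, ∀ z ∈ S.B d F, S.p z = S.p d → S.B z Fz ⊆ V →
      ∀ Fx, S.B x Fx ⊆ U → F ⊆ Fx → (∀ i ∈ Fx, S.f z i = if i ∈ F then S.f d i else 0) → 
      (S.B d F ∩ (U ∩ V)).Nonempty := by
    intro U V x hx Fz z hz hpz hzV Fx hFx hsub hz0
    obtain ⟨w, hw1, hw2⟩ := S.meet x z Fx Fz (S.p x) (S.hrefl _) (by rw [hpz]; exact hx.1) (by
      intro i hi hi' hx0 hz0'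
      have h := hz0 i hi
      by_cases hF : i ∈ F
      · rw [if_pos hF] at h
        rw [h] at hz0' ⊢
        rw [hx.2 i hF hz0']
      · rw [if_neg hF] at h
        exact absurd h hz0')
    exact ⟨w, S.N_sub hx (S.N_mono x hsub hw1), hFx hw1, hzV hw2⟩
  intro U V hU hV hUV ⟨x, hx, hxU⟩ ⟨y, hy, hyV⟩
  obtain ⟨Fx, hFx⟩ := S.exists_B hU hxU
  obtain ⟨Fy, hFy⟩ := S.exists_B hV hyV
  obtain ⟨z, hz, hz'⟩ := S.rich (S.p d) (F ∪ Fx ∪ Fy) (fun i => if i ∈ F then S.f d i else 0)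
  have hzN : z ∈ S.B d F := by
    refine ⟨by rw [hz]; exact S.hrefl _, fun i hi _ => ?_⟩
    rw [hz' i (by simp [hi]), if_pos hi]
  rcases hUV hzN with hzU | hzV
  · obtain ⟨Fz, hFz⟩ := S.exists_B hU hzU
    have := key V U y hy Fz z hzN hz hFz (F ∪ Fy)
      ((S.N_mono y Finset.subset_union_right).trans hFy) Finset.subset_union_left
      (fun i hi => hz' i (by simp only [Finset.mem_union] at hi ⊢; tauto))
    rwa [inter_comm V U] at this
  · obtain ⟨Fz, hFz⟩ := S.exists_B hV hzV
    exact key U V x hx Fz z hzN hz hFz (F ∪ Fx)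
      ((S.N_mono x Finset.subset_union_right).trans hFx) Finset.subset_union_left
      (fun i hi => hz' i (by simp only [Finset.mem_union] at hi ⊢; tauto))

instance : LocallyConnectedSpace S.Sp := by
  rw [locallyConnectedSpace_iff_subsets_isOpen_isConnected]
  intro x U hU
  obtain ⟨V, hVU, hV, hx⟩ := mem_nhds_iff.1 hU
  obtain ⟨F, hF⟩ := S.exists_B hV hx
  exact ⟨S.B x F, hF.trans hVU, S.isOpen_B _ _, S.mem_B _ _, ⟨x, S.mem_B _ _⟩, S.precon _ _⟩

theorem connected (e : Q) (he : ∀ q, ∃ q', q ∈ S.O q' ∧ (S.O q' ∩ S.O e).Nonempty) :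
    ConnectedSpace S.Sp := by
  obtain ⟨x, hx, -⟩ := S.rich e ∅ (fun _ => 0)
  have : PreconnectedSpace S.Sp := by
    refine ⟨isPreconnected_of_forall (x : S.Sp) fun y _ => ?_⟩
    obtain ⟨q', hq, r, hr, hr'⟩ := he (S.p y)
    obtain ⟨z, hz, -⟩ := S.rich q' ∅ (fun _ => 0)
    obtain ⟨w, hw, hw'⟩ := S.meet x z ∅ ∅ r (hx ▸ hr') (hz ▸ hr) (by simp)
    refine ⟨S.B x ∅ ∪ S.B z ∅, subset_univ _, Or.inl (S.mem_B _ _), Or.inr ?_, ?_⟩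
    · exact ⟨by rw [hz]; exact hq, by simp⟩
    · exact IsPreconnected.union (α := S.Sp) w hw hw' (S.precon x ∅) (S.precon z ∅)
  exact { toNonempty := ⟨x⟩ }

def R (a b : Q) : Prop := ∃ q, (S.O q ∩ S.O a).Nonempty ∧ (S.O q ∩ S.O b).Nonempty

end Dat

def UE {X : Type} [TopologicalSpace X] (x y : X) : Prop :=
  ∀ U V : Set X, IsOpen U → IsOpen V → x ∈ U → y ∈ V → (closure U ∩ closure V).Nonempty

theorem UE_homeo {X Y : Type} [TopologicalSpace X] [TopologicalSpace Y] (h : X ≃ₜ Y) {x y : X}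
    (hE : UE x y) : UE (h x) (h y) := by
  intro U V hU hV hx hy
  obtain ⟨z, hz, hz'⟩ := hE (h ⁻¹' U) (h ⁻¹' V) (hU.preimage h.continuous)
    (hV.preimage h.continuous) hx hy
  rw [← h.preimage_closure] at hz hz'
  exact ⟨h z, hz, hz'⟩

theorem UE_homeo_iff {X Y : Type} [TopologicalSpace X] [TopologicalSpace Y] (h : X ≃ₜ Y) {x y : X} :
    UE (h x) (h y) ↔ UE x y :=
  ⟨fun hE => by simpa using UE_homeo h.symm hE, UE_homeo h⟩

def Has {X : Type} (E : X → X → Prop) (x : X) (n : ℕ) : Prop :=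
  ∃ a : Fin n → X, (∀ i, E x (a i)) ∧ ∀ i j, i ≠ j → ¬ E (a i) (a j)

def SpInv {X : Type} (E : X → X → Prop) (n : ℕ) : Prop := ∃ x, Has E x n ∧ ¬ Has E x (n + 1)

theorem Has_iff {X Y : Type} {E : X → X → Prop} {E' : Y → Y → Prop} (p : X → Y)
    (hp : Function.Surjective p) (h : ∀ x y, E x y ↔ E' (p x) (p y)) (x : X) (n : ℕ) :
    Has E x n ↔ Has E' (p x) n := by
  constructor
  · rintro ⟨a, h1, h2⟩
    exact ⟨fun i => p (a i), fun i => (h _ _).1 (h1 i), fun i j hij => by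
      rw [← h]; exact h2 i j hij⟩
  · rintro ⟨a, h1, h2⟩
    choose b hb using fun i => hp (a i)
    exact ⟨b, fun i => (h _ _).2 (by rw [hb]; exact h1 i), fun i j hij => by
      rw [h, hb, hb]; exact h2 i j hij⟩

theorem SpInv_iff {X Y : Type} {E : X → X → Prop} {E' : Y → Y → Prop} (p : X → Y)
    (hp : Function.Surjective p) (h : ∀ x y, E x y ↔ E' (p x) (p y)) (n : ℕ) :
    SpInv E n ↔ SpInv E' n := by
  constructor
  · rintro ⟨x, hx⟩
    exact ⟨p x, by rwa [← Has_iff p hp h, ← Has_iff p hp h]⟩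
  · rintro ⟨y, hy⟩
    obtain ⟨x, rfl⟩ := hp y
    exact ⟨x, by rwa [Has_iff p hp h, Has_iff p hp h]⟩

namespace Dat
variable {D Q J : Type} (S : Dat D Q J)

theorem UE_iff (x y : S.Sp) : UE x y ↔ S.R (S.p x) (S.p y) := by
  classical
  constructor
  · intro h
    obtain ⟨z, hz, hz'⟩ := h (S.B x ∅) (S.B y ∅) (S.isOpen_B _ _) (S.isOpen_B _ _)
      (S.mem_B _ _) (S.mem_B _ _)
    obtain ⟨w, hw, hw'⟩ := mem_closure_iff.1 hz _ (S.isOpen_B z ∅) (S.mem_B _ _)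
    obtain ⟨v, hv, hv'⟩ := mem_closure_iff.1 hz' _ (S.isOpen_B z ∅) (S.mem_B _ _)
    exact ⟨S.p z, ⟨_, hw.1, hw'.1⟩, ⟨_, hv.1, hv'.1⟩⟩
  · rintro ⟨q, ⟨r, hr, hr'⟩, ⟨t, ht, ht'⟩⟩ U V hU hV hx hy
    obtain ⟨F, hF⟩ := S.exists_B hU hx
    obtain ⟨G, hG⟩ := S.exists_B hV hy
    obtain ⟨z, hz, hz0⟩ := S.rich q (F ∪ G) (fun _ => 0)
    refine ⟨z, mem_closure_iff.2 ?_, mem_closure_iff.2 ?_⟩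
    · intro W hW hzW
      obtain ⟨H, hH⟩ := S.exists_B hW hzW
      obtain ⟨w, hw, hw'⟩ := S.meet z x H F r (hz ▸ hr) hr' (fun i _ hi h0 =>
        absurd (hz0 i (Finset.mem_union_left _ hi)) h0)
      exact ⟨w, hH hw, hF hw'⟩
    · intro W hW hzW
      obtain ⟨H, hH⟩ := S.exists_B hW hzW
      obtain ⟨w, hw, hw'⟩ := S.meet z y H G t (hz ▸ ht) ht' (fun i _ hi h0 =>
        absurd (hz0 i (Finset.mem_union_right _ hi)) h0)
      exact ⟨w, hH hw, hG hw'⟩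

theorem weight (hD : #D ≤ ℵ₀) (lam : Cardinal) (h0 : ℵ₀ ≤ lam) (hJ : #J = lam)
    (M : Type) (hM : #M = lam) (g : M → J) (hg : Function.Injective g) (x : D)
    (hx : ∀ m, S.f x (g m) ≠ 0) : tweight S.Sp = lam := by
  classical
  apply le_antisymm
  · have hle : tweight S.Sp ≤ #(range fun x : S.Sp × Finset J => S.B x.1 x.2) :=
      csInf_le' ⟨_, S.isBasis, rfl⟩
    refine hle.trans ?_
    refine mk_range_le.trans ?_
    have : Infinite J := by rw [Cardinal.infinite_iff, hJ]; exact h0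
    show #(D × Finset J) ≤ lam
    rw [mk_prod, Cardinal.lift_id, Cardinal.lift_id, mk_finset_of_infinite, hJ]
    exact (mul_le_mul' (hD.trans h0) le_rfl).trans (mul_eq_self h0).le
  · refine le_csInf ⟨#(range fun x : S.Sp × Finset J => S.B x.1 x.2), _, S.isBasis, rfl⟩ ?_
    rintro _ ⟨Bs, hBs, rfl⟩
    have h1 : ∀ m, ∃ b : Bs, x ∈ b.1 ∧ b.1 ⊆ S.B x {g m} := by
      intro m
      obtain ⟨b, hb, hxb, hsub⟩ := hBs.exists_subset_of_mem_open (S.mem_B x {g m}) (S.isOpen_B _ _)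
      exact ⟨⟨b, hb⟩, hxb, hsub⟩
    choose φ hφ hφ' using h1
    have hfin : ∀ b : Bs, (φ ⁻¹' {b}).Finite := by
      intro b
      by_cases hb : x ∈ b.1
      · obtain ⟨F, hF⟩ := S.exists_B (hBs.isOpen b.2) hb
        refine Set.Finite.subset (F.finite_toSet.preimage hg.injOn) ?_
        intro m hm
        have hm' : φ m = b := hm
        by_contra hmF
        have hmF : g m ∉ F := hmF
        have hc : ∃ c : Fin 3, c ≠ S.f x (g m) := by
          generalize S.f x (g m) = c0
          revert c0; decide
        obtain ⟨c, hc⟩ := hc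
        obtain ⟨y, hy, hy'⟩ := S.rich (S.p x) (insert (g m) F)
          (fun i => if i = g m then c else S.f x i)
        have hyB : y ∈ S.B x F := by
          refine ⟨by rw [hy]; exact S.hrefl _, fun i hi _ => ?_⟩
          rw [hy' i (Finset.mem_insert_of_mem hi), if_neg]
          rintro rfl
          exact hmF hi
        have h2 := hφ' m (by rw [hm']; exact hF hyB)
        have h3 := h2.2 (g m) (by simp) (hx m)
        rw [hy' (g m) (by simp), if_pos rfl] at h3
        exact hc h3
      · convert Set.finite_empty
        ext m
        simp only [mem_preimage, mem_singleton_iff, mem_empty_iff_false, iff_false]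
        rintro rfl
        exact hb (hφ m)
    have hle := Cardinal.mk_le_mk_mul_of_mk_preimage_le (c := ℵ₀) φ
      (fun b => (hfin b).countable.le_aleph0)
    have hMi : Infinite M := by rw [Cardinal.infinite_iff, hM]; exact h0
    have : Infinite Bs := by
      by_contra hB
      rw [not_infinite_iff_finite] at hB
      have h5 := Set.Finite.of_finite_fibers φ (s := univ) (Set.toFinite _)
        (fun b _ => (hfin b).inter_of_right _)
      exact Set.infinite_univ h5
    rw [hM] at hle
    refine hle.trans (mul_eq_left (Cardinal.aleph0_le_mk _) (Cardinal.aleph0_le_mk _) ?_).le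
    exact aleph0_ne_zero

end Dat

inductive Sk (L : Type) : Type
  | e : Sk L
  | d : ℕ → Sk L
  | l : L → Sk L
  | f : L → Sk L

namespace Sk

def O {L : Type} (π : L → ℕ) : Sk L → Set (Sk L)
  | e => {q | q = e ∨ ∃ k, q = d k}
  | d k => {d k}
  | l m => {l m}
  | f m => {q | q = f m ∨ q = d (π m) ∨ q = l m}

instance {L : Type} [Countable L] : Countable (Sk L) := by
  have : Function.Injective (fun q : Sk L => (match q with
    | e => Sum.inl none
    | d k => Sum.inl (some k)
    | l m => Sum.inr (Sum.inl m)
    | f m => Sum.inr (Sum.inr m) : Option ℕ ⊕ (L ⊕ L))) := by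
    intro a b h
    cases a <;> cases b <;> simp_all
  exact this.countable

def RR {L : Type} (π : L → ℕ) (a b : Sk L) : Prop :=
  ∃ q, (O π q ∩ O π a).Nonempty ∧ (O π q ∩ O π b).Nonempty

section
variable {L : Type} (π : L → ℕ)

theorem RR_symm {a b : Sk L} (h : RR π a b) : RR π b a := by
  obtain ⟨q, h1, h2⟩ := h
  exact ⟨q, h2, h1⟩

theorem RR_ll (m m' : L) : RR π (l m) (l m') ↔ m = m' := by
  constructor
  · rintro ⟨q, ⟨r, h1, h2⟩, ⟨t, h3, h4⟩⟩
    cases q <;> simp_all [O]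
  · rintro rfl
    exact ⟨l m, ⟨l m, by simp [O], by simp [O]⟩, ⟨l m, by simp [O], by simp [O]⟩⟩

theorem RR_ld (m : L) (k : ℕ) : RR π (l m) (d k) ↔ π m = k := by
  constructor
  · rintro ⟨q, ⟨r, h1, h2⟩, ⟨t, h3, h4⟩⟩
    cases q <;> simp_all [O]
  · rintro rfl
    exact ⟨f m, ⟨l m, by simp [O], by simp [O]⟩, ⟨d (π m), by simp [O], by simp [O]⟩⟩

theorem RR_lf (m m' : L) : RR π (l m) (f m') ↔ π m = π m' := by
  constructor
  · rintro ⟨q, ⟨r, h1, h2⟩, ⟨t, h3, h4⟩⟩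
    cases q <;> simp_all [O]
    · rcases h3 with h | h | h <;> simp_all
  · intro h
    exact ⟨f m, ⟨l m, by simp [O], by simp [O]⟩, ⟨d (π m), by simp [O], by simp [O, h]⟩⟩

theorem RR_el (a : Sk L) : RR π e a := by
  cases a with
  | e => exact ⟨e, ⟨e, by simp [O], by simp [O]⟩, ⟨e, by simp [O], by simp [O]⟩⟩
  | d k => exact ⟨e, ⟨e, by simp [O], by simp [O]⟩, ⟨d k, by simp [O], by simp [O]⟩⟩
  | l m => exact ⟨f m, ⟨d (π m), by simp [O], by simp [O]⟩, ⟨l m, by simp [O], by simp [O]⟩⟩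
  | f m => exact ⟨e, ⟨e, by simp [O], by simp [O]⟩, ⟨d (π m), by simp [O], by simp [O]⟩⟩

def base : Sk L → Option ℕ
  | e => none
  | d k => some k
  | l _ => none
  | f m => some (π m)

def leaf : Sk L → Option L
  | l m => some m
  | _ => none

theorem RR_nonleaf (a b : Sk L) (ha : leaf a = none) (hb : leaf b = none) : RR π a b := by
  refine ⟨e, ?_, ?_⟩
  · cases a with
    | e => exact ⟨e, by simp [O], by simp [O]⟩
    | d k => exact ⟨d k, by simp [O], by simp [O]⟩
    | l m => simp [leaf] at ha
    | f m => exact ⟨d (π m), by simp [O], by simp [O]⟩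
  · cases b with
    | e => exact ⟨e, by simp [O], by simp [O]⟩
    | d k => exact ⟨d k, by simp [O], by simp [O]⟩
    | l m => simp [leaf] at hb
    | f m => exact ⟨d (π m), by simp [O], by simp [O]⟩

theorem leaf_some {a : Sk L} {m : L} (h : leaf a = some m) : a = l m := by
  cases a <;> simp_all [leaf]

theorem leaf_none_of_base {a : Sk L} {k : ℕ} (h : base π a = some k) : leaf a = none := by
  cases a <;> simp_all [leaf, base]

theorem RR_base (a : Sk L) (k : ℕ) (h : base π a = some k) (m : L) : 
    RR π a (l m) ↔ π m = k := by
  cases a with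
  | e => simp [base] at h
  | l m => simp [base] at h
  | d k' =>
    simp only [base, Option.some.injEq] at h
    subst h
    exact ⟨fun h => (RR_ld π _ _).1 (RR_symm π h), fun h => RR_symm π ((RR_ld π _ _).2 h)⟩
  | f m' =>
    simp only [base, Option.some.injEq] at h
    subst h
    exact ⟨fun h => (RR_lf π _ _).1 (RR_symm π h), fun h => RR_symm π ((RR_lf π _ _).2 h)⟩

theorem leaf_inj {n : ℕ} {a : Fin n → Sk L} (h : ∀ i j, i ≠ j → ¬ RR π (a i) (a j)) :
    Function.Injective (fun i => leaf (a i)) := by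
  intro i j hij
  by_contra hne
  apply h i j hne
  simp only at hij
  rcases hi : leaf (a i) with _ | m
  · exact RR_nonleaf π _ _ hi (by rw [← hij, hi])
  · rw [leaf_some hi, leaf_some (hij.symm.trans hi), RR_ll]

theorem has_leaf (m : L) (n : ℕ) (h : Has (RR π) (l m) n) : n ≤ 1 := by
  obtain ⟨a, h1, h2⟩ := h
  by_contra hn
  have key : ∀ i, leaf (a i) = none := by
    intro i
    rcases hi : leaf (a i) with _ | m'
    · rfl
    have h3 := h1 i
    rw [leaf_some hi, RR_ll] at h3
    subst h3
    have : ∃ j, j ≠ i := by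
      by_cases h : i = ⟨0, by omega⟩
      · exact ⟨⟨1, by omega⟩, by rw [h]; simp⟩
      · exact ⟨⟨0, by omega⟩, fun h' => h h'.symm⟩
    obtain ⟨j, hj⟩ := this
    exact absurd (by rw [leaf_some hi]; exact h1 j) (h2 i j hj.symm)
  exact h2 ⟨0, by omega⟩ ⟨1, by omega⟩ (by simp) (RR_nonleaf π _ _ (key _) (key _))

theorem has_e [Infinite L] (n : ℕ) : Has (RR π) (e : Sk L) n :=
  ⟨fun i => l (Infinite.natEmbedding L i), fun _ => RR_el π _, fun i j hij h => by
    rw [RR_ll] at h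
    exact hij (Fin.ext ((Infinite.natEmbedding L).injective h))⟩

end

abbrev Lf (s : ℕ → ℕ) : Type := Σ k : ℕ, Fin (s k)

abbrev pr (s : ℕ → ℕ) : Lf s → ℕ := Sigma.fst

theorem has_base (s : ℕ → ℕ) (a : Sk (Lf s)) (k : ℕ) (h : base (pr s) a = some k) (n : ℕ) :
    Has (RR (pr s)) a n ↔ n ≤ s k + 1 := by
  constructor
  · rintro ⟨b, h1, h2⟩
    have hinj := leaf_inj _ h2
    have hk : ∀ i m, leaf (b i) = some m → m.1 = k := by
      intro i m hm
      have := h1 i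
      rw [leaf_some hm] at this
      exact (RR_base _ a k h m).1 this
    let S : Set (Option (Lf s)) := range (fun o : Option (Fin (s k)) => o.map (Sigma.mk k))
    have hS : ∀ i, leaf (b i) ∈ S := by
      intro i
      rcases hi : leaf (b i) with _ | ⟨k', j⟩
      · exact ⟨none, rfl⟩
      · have := hk i _ hi
        simp only at this
        subst this
        exact ⟨some j, rfl⟩
    choose o ho using hS
    have : Function.Injective o := by
      intro i j hij
      apply hinj
      simp only
      rw [← ho i, ← ho j, hij]
    simpa using Fintype.card_le_of_injective o this
  · intro hn
    let c : ℕ → Sk (Lf s) := fun i => if hi : i < s k then l ⟨k, i, hi⟩ else d (k + 1)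
    have hnl := leaf_none_of_base _ h
    refine ⟨fun i => c i, fun i => ?_, fun i j hij => ?_⟩
    · simp only [c]
      split_ifs with hi
      · exact (RR_base _ a k h _).2 rfl
      · exact RR_nonleaf _ _ _ hnl rfl
    · simp only [c]
      have hij' : i.1 ≠ j.1 := fun h => hij (Fin.ext h)
      have := i.2
      have := j.2
      split_ifs with hi hj hj
      · rw [RR_ll]
        simpa using hij'
      · rw [RR_ld]; simp
      · intro h
        have := (RR_ld _ _ _).1 (RR_symm _ h)
        simp at this
      · omega

theorem inv_iff (s : ℕ → ℕ) (hs : ∀ k, 1 ≤ s k) (n : ℕ) (hn : 2 ≤ n) :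
    SpInv (RR (pr s)) n ↔ ∃ k, n = s k + 1 := by
  have : Infinite (Lf s) := Infinite.of_injective (fun k : ℕ => (⟨k, 0, hs k⟩ : Lf s))
    (fun a b h => (Sigma.mk.inj h).1)
  constructor
  · rintro ⟨x, hx, hx'⟩
    have hb : ∀ k, base (pr s) x = some k → ∃ k, n = s k + 1 := by
      intro k hk
      rw [has_base s x k hk] at hx hx'
      exact ⟨k, by omega⟩
    cases x with
    | e => exact absurd (has_e _ _) hx'
    | d k => exact hb k rfl
    | l m => have := has_leaf _ _ _ hx; omega
    | f m => exact hb _ rfl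
  · rintro ⟨k, rfl⟩
    refine ⟨d k, ?_, ?_⟩ <;> rw [has_base s (d k) k rfl] <;> omega

end Sk

theorem restr_inj (G : Finset (ℕ → Bool)) :
    ∃ n : ℕ, ∀ x ∈ G, ∀ y ∈ G, (∀ j < n, x j = y j) → x = y := by
  classical
  have : ∀ z : (ℕ → Bool) × (ℕ → Bool), ∃ n : ℕ, (∀ j < n, z.1 j = z.2 j) → z.1 = z.2 := by
    intro z
    by_cases h : z.1 = z.2
    · exact ⟨0, fun _ => h⟩
    · obtain ⟨j, hj⟩ := Function.ne_iff.1 h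
      exact ⟨j + 1, fun h' => absurd (h' j (by omega)) hj⟩
  choose N hN using this
  refine ⟨(G ×ˢ G).sup N, fun x hx y hy h => hN (x, y) fun j hj => h j ?_⟩
  exact hj.trans_le (Finset.le_sup (f := N) (Finset.mk_mem_product hx hy))

abbrev DD (s : ℕ → ℕ) : Type :=
  Sk (Sk.Lf s) × (Σ n : ℕ, ((Fin n → Bool) → Fin 3)) × (Σ n : ℕ, (Fin n → Fin 3))

noncomputable def code (s : ℕ → ℕ) : DD s → ℕ := (exists_injective_nat (DD s)).choose

theorem code_inj (s : ℕ → ℕ) : Function.Injective (code s) :=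
  (exists_injective_nat (DD s)).choose_spec

noncomputable def ff (s : ℕ → ℕ) {M : Type} (em : M → ℕ → Bool) (τ : M → Equiv.Perm (Fin 3))
    (x : DD s) : ℕ ⊕ M → Fin 3
  | Sum.inl i => if h : i < x.2.2.1 then x.2.2.2 ⟨i, h⟩ else
      if i.unpair.1 = code s x then 1 else 2
  | Sum.inr m => τ m (x.2.1.2 (fun j => em m j))

noncomputable def mkDat (s : ℕ → ℕ) {M : Type} (em : M → ℕ → Bool)
    (hem : Function.Injective em) (τ : M → Equiv.Perm (Fin 3)) :
    Dat (DD s) (Sk (Sk.Lf s)) (ℕ ⊕ M) where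
  p := fun x => x.1
  O := Sk.O (Sk.pr s)
  f := ff s em τ
  hrefl := by
    intro q
    cases q <;> simp [Sk.O]
  htrans := by
    intro q r hr t ht
    cases q <;> cases r <;> simp_all [Sk.O]
  rich := by
    classical
    intro q F g
    let G : Finset M := F.toRight
    obtain ⟨n, hn⟩ := restr_inj (G.image em)
    refine ⟨(q, ⟨n, fun v => if h : ∃ m ∈ G, (fun j : Fin n => em m j) = v then
      (τ h.choose).symm (g (Sum.inr h.choose)) else 0⟩,
      ⟨F.toLeft.sup id + 1, fun i => g (Sum.inl i)⟩), rfl, ?_⟩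
    rintro (i | m) hi
    · have : i < F.toLeft.sup id + 1 :=
        Nat.lt_succ_of_le (Finset.le_sup (f := id) (Finset.mem_toLeft.2 hi))
      simp only [ff]
      rw [dif_pos this]
    · have hm : m ∈ G := Finset.mem_toRight.2 hi
      have h : ∃ m' ∈ G, (fun j : Fin n => em m' j) = (fun j : Fin n => em m j) := ⟨m, hm, rfl⟩
      simp only [ff]
      rw [dif_pos h]
      have : h.choose = m := by
        apply hem
        apply hn _ (Finset.mem_image_of_mem _ h.choose_spec.1) _ (Finset.mem_image_of_mem _ hm)
        intro j hj
        exact congrFun h.choose_spec.2 ⟨j, hj⟩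
      rw [this]
      simp
  sep := by
    intro x y hxy
    let N := x.2.2.1 + y.2.2.1
    have hge := Nat.right_le_pair (code s x) N
    have hx : ¬ (Nat.pair (code s x) N < x.2.2.1) := by omega
    have hy : ¬ (Nat.pair (code s x) N < y.2.2.1) := by omega
    have hne : code s x ≠ code s y := fun h => hxy (code_inj s h)
    refine ⟨Sum.inl (Nat.pair (code s x) N), ?_⟩
    simp [ff, hx, hy, hne]

section
variable (s : ℕ → ℕ) {M : Type} (em : M → ℕ → Bool)
    (hem : Function.Injective em) (τ : M → Equiv.Perm (Fin 3))

theorem mkDat_inv (hs : ∀ k, 1 ≤ s k) (n : ℕ) (hn : 2 ≤ n) :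
    SpInv (UE (X := (mkDat s em hem τ).Sp)) n ↔ ∃ k, n = s k + 1 := by
  rw [← Sk.inv_iff s hs n hn]
  refine SpInv_iff (mkDat s em hem τ).p ?_ (mkDat s em hem τ).UE_iff n
  intro q
  obtain ⟨d, hd, -⟩ := (mkDat s em hem τ).rich q ∅ (fun _ => 0)
  exact ⟨d, hd⟩

theorem mkDat_props (lam : Cardinal) (h0 : ℵ₀ ≤ lam) (hM : #M = lam) (hτ : ∀ m, τ m 2 ≠ 0) :
    T2Space (mkDat s em hem τ).Sp ∧ ConnectedSpace (mkDat s em hem τ).Sp ∧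
    LocallyConnectedSpace (mkDat s em hem τ).Sp ∧
        #(mkDat s em hem τ).Sp = ℵ₀ ∧ tweight (mkDat s em hem τ).Sp = lam := by
  have hD : #(DD s) = ℵ₀ := by
    have : Infinite (Sk (Sk.Lf s)) := Infinite.of_injective Sk.d (fun a b h => by simpa using h)
    have : Nonempty (Σ n : ℕ, ((Fin n → Bool) → Fin 3)) := ⟨⟨0, fun _ => 0⟩⟩
    have : Nonempty (Σ n : ℕ, (Fin n → Fin 3)) := ⟨⟨0, fun _ => 0⟩⟩
    exact mk_eq_aleph0 _
  refine ⟨inferInstance, ?_, inferInstance, hD, ?_⟩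
  · refine (mkDat s em hem τ).connected Sk.e ?_
    intro q
    show ∃ q', q ∈ Sk.O (Sk.pr s) q' ∧ (Sk.O (Sk.pr s) q' ∩ Sk.O (Sk.pr s) Sk.e).Nonempty
    cases q with
    | e => exact ⟨Sk.e, by simp [Sk.O], Sk.e, by simp [Sk.O], by simp [Sk.O]⟩
    | d k => exact ⟨Sk.e, by simp [Sk.O], Sk.e, by simp [Sk.O], by simp [Sk.O]⟩
    | l m => exact ⟨Sk.f m, by simp [Sk.O], Sk.d m.1, by simp [Sk.O], by simp [Sk.O]⟩
    | f m => exact ⟨Sk.f m, by simp [Sk.O], Sk.d m.1, by simp [Sk.O], by simp [Sk.O]⟩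
  · refine (mkDat s em hem τ).weight hD.le lam h0 ?_ M hM Sum.inr Sum.inr_injective
      (Sk.e, ⟨0, fun _ => 2⟩, ⟨0, fun _ => 0⟩) (fun m => ?_)
    · rw [mk_sum]; simp [hM, add_eq_right h0 h0]
    · exact hτ m

end

theorem props_case2 (lam : Cardinal) (h0 : ℵ₀ ≤ lam) (M : Type) (hM : #M = lam)
    (em : M → ℕ → Bool) (hem : Function.Injective em)
    (h2 : 2 ^ lam ≤ Cardinal.continuum) : 
    ExistsNonHomeoFamily (2 ^ lam) (fun X t =>
      letI := t
      T2Space X ∧ ConnectedSpace X ∧ LocallyConnectedSpace X ∧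
        #X = ℵ₀ ∧ tweight X = lam) := by
  classical
  let s : Set ℕ → ℕ → ℕ := fun A k => 2 * k + 1 + (if k ∈ A then 1 else 0)
  have hs : ∀ A k, 1 ≤ s A k := fun A k => by simp only [s]; omega
  refine ⟨Set ℕ, fun A => (mkDat (s A) em hem (fun _ => 1)).Sp, fun A => inferInstance,
    ?_, fun A => ?_, fun A A' hne => ⟨fun h => hne ?_⟩⟩
  · rw [mk_set, mk_nat]
    exact le_antisymm (power_le_power_left two_ne_zero h0) (by simpa using h2)
  · exact mkDat_props _ _ _ _ lam h0 (hM) (fun _ => by decide)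
  · have key : ∀ n, 2 ≤ n → ((∃ k, n = s A k + 1) ↔ ∃ k, n = s A' k + 1) := by
      intro n hn
      rw [← mkDat_inv (s A) em hem (fun _ => 1) (hs A) n hn,
        ← mkDat_inv (s A') em hem (fun _ => 1) (hs A') n hn]
      exact SpInv_iff h h.surjective (fun x y => (UE_homeo_iff h).symm) n
    have hh : ∀ A k, (∃ k', 2 * k + 3 = s A k' + 1) ↔ k ∈ A := by
      intro A k
      constructor
      · rintro ⟨k', hk⟩
        simp only [s] at hk
        split_ifs at hk with hA
        · have : k = k' := by omega
          rwa [this]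
        · omega
      · intro hk
        exact ⟨k, by simp [s, hk]⟩
    ext k
    rw [← hh A, ← hh A', key _ (by omega)]

theorem props_case1 (lam : Cardinal) (h0 : ℵ₀ ≤ lam) (M : Type) (hM : #M = lam)
    (em : M → ℕ → Bool) (hem : Function.Injective em)
    (h2 : Cardinal.continuum < 2 ^ lam) : 
    ExistsNonHomeoFamily (2 ^ lam) (fun X t =>
      letI := t
      T2Space X ∧ ConnectedSpace X ∧ LocallyConnectedSpace X ∧
        #X = ℵ₀ ∧ tweight X = lam) := by
  classical
  let s : ℕ → ℕ := fun _ => 1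
  let τ : Set M → M → Equiv.Perm (Fin 3) :=
    fun T m => if m ∈ T then 1 else Equiv.swap 0 1
  let S : ∀ T : Set M, Dat (DD s) (Sk (Sk.Lf s)) (ℕ ⊕ M) :=
    fun T => mkDat s em hem (τ T)
  have hP := fun T => mkDat_props s em hem (τ T) lam h0 (hM) (by
    intro m
    simp only [τ]
    split_ifs <;> decide)
  let r : Setoid (Set M) :=
    ⟨fun T T' => Nonempty ((S T).Sp ≃ₜ (S T').Sp), fun T => ⟨Homeomorph.refl _⟩,
      fun ⟨h⟩ => ⟨h.symm⟩, fun ⟨h⟩ ⟨h'⟩ => ⟨h.trans h'⟩⟩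
  -- the topology determines T
  have hopen : ∀ T m, IsOpen (X := (S T).Sp) {x : DD s | x.2.1.2 (fun j => em m j) = 1} ↔ m ∈ T := by
    intro T m
    constructor
    · intro ho
      by_contra hm
      obtain ⟨x, hxe, hx⟩ := (S T).rich Sk.e {Sum.inr m} (fun _ => 0)
      have hτ : τ T m = Equiv.swap 0 1 := if_neg hm
      have hf : ∀ x : DD s, (S T).f x (Sum.inr m) =
          Equiv.swap 0 1 (x.2.1.2 (fun j => em m j)) := by
        intro x
        show τ T m _ = _
        rw [hτ]
      have hx := hx _ (Finset.mem_singleton_self _)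
      have hx1 : x.2.1.2 (fun j => em m j) = 1 := by
        rw [hf] at hx
        revert hx
        generalize x.2.1.2 (fun j => em m j) = c
        revert c
        decide
      obtain ⟨F, hF⟩ := (S T).exists_B ho hx1
      obtain ⟨y, hy, hy'⟩ := (S T).rich Sk.e (insert (Sum.inr m) F)
        (fun i => if i = Sum.inr m then 2 else (S T).f x i)
      have hyF : y ∈ (S T).B x F := by
        refine ⟨?_, fun i hi hi0 => ?_⟩
        · rw [hy, ← hxe]; exact (S T).hrefl _
        · rw [hy' i (Finset.mem_insert_of_mem hi), if_neg]
          rintro rfl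
          exact hi0 hx
      have hy1 : y.2.1.2 (fun j => em m j) = 1 := hF hyF
      have hy2 := hy' (Sum.inr m) (Finset.mem_insert_self _ _)
      rw [hf, hy1, if_pos rfl] at hy2
      revert hy2
      decide
    · intro hm (x : DD s) hx
      have hτ : τ T m = 1 := if_pos hm
      have hf : ∀ x : DD s, (S T).f x (Sum.inr m) = x.2.1.2 (fun j => em m j) := by
        intro x
        show τ T m _ = _
        rw [hτ]
        rfl
      refine ⟨{Sum.inr m}, fun y hy => ?_⟩
      have hx : x.2.1.2 (fun j => em m j) = 1 := hx
      have := hy.2 (Sum.inr m) (by simp) (by rw [hf, hx]; decide)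
      rw [hf, hf, hx] at this
      exact this
  have hfib : ∀ b : Quotient r, #((fun T => (Quotient.mk r T)) ⁻¹' {b}) ≤ Cardinal.continuum := by
    intro b
    have hh : ∀ T : (fun T => (Quotient.mk r T)) ⁻¹' {b},
        Nonempty ((S T.1).Sp ≃ₜ (S b.out).Sp) := by
      intro T
      have h1 : Quotient.mk r T.1 = Quotient.mk r b.out := by
        rw [Quotient.out_eq]; exact T.2
      exact Quotient.exact h1
    have h := fun T => (hh T).some
    let φ : (fun T => (Quotient.mk r T)) ⁻¹' {b} → (DD s → DD s) := fun T => (h T).symm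
    have hφ : Function.Injective φ := by
      intro T T' hTT
      apply Subtype.ext
      ext m
      rw [← hopen T.1 m, ← hopen T'.1 m, ← (h T).symm.isOpen_preimage,
        ← (h T').symm.isOpen_preimage]
      have : (h T).symm ⁻¹' {x : DD s | x.2.1.2 (fun j => em m j) = 1} =
        (h T').symm ⁻¹' {x : DD s | x.2.1.2 (fun j => em m j) = 1} := by
        exact congrArg (fun g : DD s → DD s => g ⁻¹' {x : DD s | x.2.1.2 (fun j => em m j) = 1}) hTT
      rw [this]
    refine (mk_le_of_injective hφ).trans ?_
    have hD : #(DD s) = ℵ₀ := (hP ∅).2.2.2.1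
    rw [← power_def, hD, aleph0_power_aleph0]
  refine ⟨Quotient r, fun c => (S c.out).Sp, fun c => inferInstance, ?_, fun c => hP _,
    fun c c' hne => ⟨fun h => hne ?_⟩⟩
  · have hset : #(Set M) = 2 ^ lam := by rw [mk_set, hM]
    apply le_antisymm
    · rw [← hset]; exact mk_quotient_le
    · by_contra hlt
      rw [not_le] at hlt
      have h3 := mk_le_mk_mul_of_mk_preimage_le _ hfib
      rw [hset] at h3
      exact absurd (mul_lt_of_lt (h0.trans (cantor lam).le) hlt h2) (not_lt.2 h3)
  · rw [← Quotient.out_eq c, ← Quotient.out_eq c']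
    exact Quotient.sound ⟨h⟩

/-- Theorem 5: for every infinite `λ ≤ 𝔠` there exist `2 ^ λ` mutually non-homeomorphic
connected, locally connected Hausdorff spaces of cardinality `ℵ₀` and weight `λ`. -/
theorem stmt15 (lam : Cardinal) (h0 : ℵ₀ ≤ lam) (h1 : lam ≤ Cardinal.continuum) :
    ExistsNonHomeoFamily (2 ^ lam) (fun X t =>
      letI := t
      T2Space X ∧ ConnectedSpace X ∧ LocallyConnectedSpace X ∧
        #X = ℵ₀ ∧ tweight X = lam) := by
  obtain ⟨em⟩ : Nonempty (lam.out ↪ (ℕ → Bool)) := by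
    rw [← Cardinal.le_def, mk_out]; simpa using h1
  rcases le_or_gt (2 ^ lam) Cardinal.continuum with h2 | h2
  · exact props_case2 lam h0 lam.out (mk_out _) em em.injective h2
  · exact props_case1 lam h0 lam.out (mk_out _) em em.injective h2
end
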